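/- arXiv:2302.00708 — 2 statements merged into one kernel-verified Lean document; each statement's English description precedes it below -/
import Mathlib

section
/- For every natural number n: for every B in {3, 5, 6, 8, 9, 11, 15, 16}, b_34(289n + 17B − 12) ≡ p_15(17n + B) (mod 2); for every B in {1, 5, 6, 10, 12, 13, 15, 16}, b_68(289n + 17B − 12) ≡ p_13(17n + B) (mod 2); for every B in {2, 3, 7, 9, 10, 12, 13, 15}, b_136(289n + 17B − 12) ≡ p_9(17n + B) (mod 2); and for every B in {1, 3, 4, 6, 7, 9, 13, 14}, b_272(289n + 17B − 12) ≡ p(17n + B) (mod 2). -/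
/-- The number of `m`-regular partitions of `n`, i.e. partitions of `n`
in which no part is divisible by `m`. -/
noncomputable def numRegularPartitions (m n : ℕ) : ℕ :=
  Nat.card {π : n.Partition // ∀ j ∈ π.parts, ¬ m ∣ j}

/-- The number of `t`-multipartitions of `n`, i.e. `t`-tuples of partitions
whose sizes sum to `n`. -/
noncomputable def numMultipartitions (t n : ℕ) : ℕ :=
  Nat.card {f : Fin t → Σ k : ℕ, k.Partition // (∑ i, (f i).1) = n}

namespace PartitionParity
/-!
Write `F = ∏ (1 - qⁿ)`, `P = 1 / F` and `G = q F(q²⁴)`, with coefficients modulo `2`. By Euler's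
pentagonal number theorem `G` is the theta series of the squares of the `a` coprime to `6`, and
`G³` is the theta series of three times the odd squares, so for odd `k ≤ 17` the power `Gᵏ` is a
theta series or a product of two. If the binary form of the product is anisotropic modulo `17`,
multiplication by `17` shows that `T₁₇ Gᵏ = 0`; otherwise the representations are matched through
an element `u + v √(-D)` of norm `17`. The outcome is `T₁₇ Gᵏ = 0` for `0 < k < 17` and
`T₁₇ G¹⁷ = G`.

Up to substituting `q¹⁷` for `q`, these are the power sums of the `18` conjugates of `G`, namely
`G(q²⁸⁹)` and `G(ζʲ q)` with `ζ¹⁷ = 1`. Newton's identities give their seventeenth elementary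
symmetric function, and the product of all of them is `G(q¹⁷)¹⁸`. The quotient of the two is the
sum of the inverses of the conjugates, which yields the dissection `P¹⁷ = U₁₇(q¹² P) + P(q¹⁷)`.

The `17 · 2ᵃ`-regular partitions are generated by `F(q¹⁷)^(2ᵃ) P`. If `2ᵃ + t = 17`, multiplying
the dissection by `F^(2ᵃ) = F(q^(2ᵃ))` therefore gives
`U₁₇(q¹² F(q¹⁷)^(2ᵃ) P) = Pᵗ - F(q^(2ᵃ)) P(q¹⁷)`, and completing the square in the pentagonal
numbers shows that the last term has no `qⁿ` unless `24 n / 2ᵃ + 1` is a square modulo `17`.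
-/


open PowerSeries Finset.HasAntidiagonal

section Decimation

variable {R S : Type*} [CommRing R] [CommRing S]

/-- The operator `U_p` on power series, `∑ a(n) Xⁿ ↦ ∑ a(pn) Xⁿ`. -/
noncomputable def decimate (p : ℕ) (A : R⟦X⟧) : R⟦X⟧ := mk fun n => coeff (p * n) A

@[simp]
lemma coeff_decimate (p : ℕ) (A : R⟦X⟧) (n : ℕ) : coeff n (decimate p A) = coeff (p * n) A :=
  coeff_mk _ _

lemma map_decimate (φ : R →+* S) (p : ℕ) (A : R⟦X⟧) :
    map φ (decimate p A) = decimate p (map φ A) := by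
  ext n
  simp only [coeff_map, coeff_decimate]

lemma decimate_expand_mul {p : ℕ} (hp : p ≠ 0) (A B : R⟦X⟧) :
    decimate p (expand p hp A * B) = A * decimate p B := by
  ext n
  rw [coeff_decimate, coeff_mul, coeff_mul]
  symm
  refine Finset.sum_of_injOn (fun x => (p * x.1, p * x.2))
    (fun x _ y _ h => Prod.ext (by simpa [hp] using congrArg Prod.fst h)
      (by simpa [hp] using congrArg Prod.snd h))
    (fun x hx => by simp_all [← mul_add]) ?_ (fun x _ => by simp [coeff_expand_mul])
  rintro ⟨i, j⟩ hx hne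
  rw [coeff_expand_of_not_dvd p hp, zero_mul]
  rintro ⟨i, rfl⟩
  rw [mem_antidiagonal] at hx
  obtain ⟨j, rfl⟩ : p ∣ j := (Nat.dvd_add_right (dvd_mul_right p i)).1 (hx ▸ dvd_mul_right p n)
  refine hne ⟨(i, j), ?_, rfl⟩
  simpa [← mul_add, hp] using hx

lemma decimate_expand_of_coprime {p m : ℕ} (hm : m ≠ 0) (h : m.Coprime p) (A : R⟦X⟧) :
    decimate p (expand m hm A) = expand m hm (decimate p A) := by
  ext n
  simp only [coeff_decimate, coeff_expand, h.dvd_mul_left]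
  split_ifs with hn
  · rw [Nat.mul_div_assoc p hn]
  · rfl

lemma expand_comm {p q : ℕ} (hp : p ≠ 0) (hq : q ≠ 0) (A : R⟦X⟧) :
    expand p hp (expand q hq A) = expand q hq (expand p hp A) := by
  rw [← expand_mul, ← expand_mul]
  simp only [mul_comm]

lemma expand_injective {p : ℕ} (hp : p ≠ 0) : Function.Injective (expand p hp (R := R)) := by
  intro A B h
  ext n
  simpa only [coeff_expand_mul] using congrArg (coeff (p * n)) h

/-- The weight-free Hecke operator `T_p = U_p + V_p`, where `V_p` substitutes `X^p` for `X`;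
modulo `2` all the usual weight factors of the second summand are `1`. -/
noncomputable def hecke (p : ℕ) [NeZero p] (A : R⟦X⟧) : R⟦X⟧ :=
  decimate p A + expand p (NeZero.ne p) A

variable {p : ℕ} [NeZero p]

lemma map_hecke (φ : R →+* S) (A : R⟦X⟧) : map φ (hecke p A) = hecke p (map φ A) := by
  rw [hecke, map_add, map_decimate, map_expand, hecke]

lemma hecke_expand_of_coprime {m : ℕ} (hm : m ≠ 0) (h : m.Coprime p) (A : R⟦X⟧) :
    hecke p (expand m hm A) = expand m hm (hecke p A) := by
  rw [hecke, decimate_expand_of_coprime hm h, expand_comm, hecke, map_add]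

lemma expand_two_pow (a : ℕ) (A : (ZMod 2)⟦X⟧) :
    expand (2 ^ a) (NeZero.ne _) A = A ^ 2 ^ a := by
  rw [← MvPowerSeries.map_iterateFrobenius_expand 2 two_ne_zero A a]
  have : iterateFrobenius (ZMod 2) 2 a = RingHom.id _ := Subsingleton.elim _ _
  rw [this, MvPowerSeries.map_id]
  rfl

lemma expand_two (A : (ZMod 2)⟦X⟧) : expand 2 two_ne_zero A = A ^ 2 := by
  simpa using expand_two_pow 1 A

lemma hecke_sq_eq_zero (hp : Odd p) {A : (ZMod 2)⟦X⟧} (h : hecke p A = 0) :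
    hecke p (A ^ 2) = 0 := by
  rw [← expand_two, hecke_expand_of_coprime _ (Nat.coprime_two_left.2 hp), h, map_zero]

end Decimation

section FiberSeries

variable {R ι κ : Type*} [CommRing R]

/-- The generating function of the fibres of a statistic `f`: the coefficient of `Xⁿ` is the
number of `i` with `f i = n` (read as `0` if there are infinitely many). -/
noncomputable def fiberSeries (R : Type*) [CommRing R] {ι : Type*} (f : ι → ℕ) : R⟦X⟧ :=
  mk fun n => (Nat.card {i // f i = n} : R)

@[simp]
lemma coeff_fiberSeries (f : ι → ℕ) (n : ℕ) :
    coeff n (fiberSeries R f) = (Nat.card {i // f i = n} : R) := coeff_mk _ _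

lemma fiberSeries_comp_equiv (e : κ ≃ ι) (f : ι → ℕ) :
    fiberSeries R (f ∘ e) = fiberSeries R f := by
  ext n
  rw [coeff_fiberSeries, coeff_fiberSeries]
  exact congrArg _ (Nat.card_congr (e.subtypeEquiv fun _ => Iff.rfl))

lemma expand_fiberSeries {m : ℕ} (hm : m ≠ 0) (f : ι → ℕ) :
    expand m hm (fiberSeries R f) = fiberSeries R fun i => m * f i := by
  ext n
  by_cases hn : m ∣ n
  · obtain ⟨n, rfl⟩ := hn
    simp [coeff_expand_mul, hm]
  · have : IsEmpty {i // m * f i = n} := ⟨fun i => hn ⟨_, i.2.symm⟩⟩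
    rw [coeff_expand_of_not_dvd m hm _ hn, coeff_fiberSeries, Nat.card_of_isEmpty, Nat.cast_zero]

lemma coeff_fiberSeries_of_injective {f : ι → ℕ} (hf : f.Injective) (i : ι) :
    coeff (f i) (fiberSeries R f) = 1 := by
  have : Unique {j // f j = f i} := ⟨⟨⟨i, rfl⟩⟩, fun j => Subtype.ext (hf j.2)⟩
  rw [coeff_fiberSeries, Nat.card_unique, Nat.cast_one]

lemma coeff_fiberSeries_of_notMem_range {f : ι → ℕ} {n : ℕ} (hn : n ∉ Set.range f) :
    coeff n (fiberSeries R f) = 0 := by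
  have : IsEmpty {i // f i = n} := ⟨fun i => hn ⟨i, i.2⟩⟩
  rw [coeff_fiberSeries, Nat.card_of_isEmpty, Nat.cast_zero]

/-- A pair with prescribed sum, split by the two values. -/
def sumFiberEquiv (f : ι → ℕ) (g : κ → ℕ) (n : ℕ) :
    {x : ι × κ // f x.1 + g x.2 = n} ≃
      Σ c : antidiagonal n, {i // f i = c.1.1} × {j // g j = c.1.2} where
  toFun x := ⟨⟨(f x.1.1, g x.1.2), mem_antidiagonal.2 x.2⟩, ⟨x.1.1, rfl⟩, ⟨x.1.2, rfl⟩⟩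
  invFun y := ⟨(y.2.1, y.2.2), by rw [y.2.1.2, y.2.2.2]; exact mem_antidiagonal.1 y.1.2⟩
  left_inv _ := rfl
  right_inv := by
    rintro ⟨⟨⟨a, b⟩, _⟩, ⟨i, hi⟩, ⟨j, hj⟩⟩
    obtain rfl : f i = a := hi
    obtain rfl : g j = b := hj
    rfl

lemma finite_fiber_add (f : ι → ℕ) (g : κ → ℕ) [∀ n, Finite {i // f i = n}]
    [∀ n, Finite {j // g j = n}] (n : ℕ) : Finite {x : ι × κ // f x.1 + g x.2 = n} :=
  .of_equiv _ (sumFiberEquiv f g n).symm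

lemma fiberSeries_mul {f : ι → ℕ} {g : κ → ℕ} (hf : ∀ n, Finite {i // f i = n})
    (hg : ∀ n, Finite {j // g j = n}) :
    fiberSeries R f * fiberSeries R g = fiberSeries R fun x : ι × κ => f x.1 + g x.2 := by
  ext n
  rw [coeff_mul, coeff_fiberSeries, Nat.card_congr (sumFiberEquiv f g n), Nat.card_sigma,
    Nat.cast_sum, ← Finset.sum_coe_sort]
  simp only [coeff_fiberSeries, Nat.card_prod, Nat.cast_mul]

lemma finite_fiber_sum {f : ι → ℕ} (hf : ∀ n, Finite {i // f i = n}) (t n : ℕ) :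
    Finite {x : Fin t → ι // ∑ k, f (x k) = n} := by
  induction t generalizing n with
  | zero => infer_instance
  | succ t ih =>
    have := finite_fiber_add f (fun x : Fin t → ι => ∑ k, f (x k)) n
    refine .of_equiv _ ((Fin.consEquiv fun _ => ι).subtypeEquiv fun x => ?_ :
      {x : ι × (Fin t → ι) // f x.1 + ∑ k, f (x.2 k) = n} ≃ _)
    rw [Fin.sum_univ_succ]
    rfl

lemma fiberSeries_pow {f : ι → ℕ} (hf : ∀ n, Finite {i // f i = n}) (t : ℕ) :
    fiberSeries R f ^ t = fiberSeries R fun x : Fin t → ι => ∑ k, f (x k) := by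
  induction t with
  | zero =>
    ext n
    rcases eq_or_ne n 0 with rfl | hn
    · simp
    · simp [coeff_one, hn, hn.symm]
  | succ t ih =>
    rw [pow_succ', ih, fiberSeries_mul hf (finite_fiber_sum hf t),
      ← fiberSeries_comp_equiv (Fin.consEquiv fun _ => ι)]
    congr 1
    ext x
    simp [Fin.sum_univ_succ, Fin.consEquiv]

lemma hecke_fiberSeries_eq_zero [CharP R 2] {p : ℕ} [NeZero p] {f : ι → ℕ} {s : ι → ι}
    (hs : s.Injective) (hfs : ∀ i, f (s i) = p ^ 2 * f i)
    (hrange : ∀ i, p ∣ f i → i ∈ Set.range s) : hecke p (fiberSeries R f) = 0 := by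
  have hp := NeZero.ne p
  ext n
  rw [hecke, map_add, coeff_decimate, map_zero]
  by_cases hn : p ∣ n
  · obtain ⟨n, rfl⟩ := hn
    have e : {i // f i = n} ≃ {i // f i = p * (p * n)} :=
      .ofBijective (fun i => ⟨s i, by rw [hfs, i.2]; ring⟩)
        ⟨fun i j h => Subtype.ext (hs (congrArg Subtype.val h)), fun j => by
          obtain ⟨i, hi⟩ := hrange j ⟨_, j.2⟩
          refine ⟨⟨i, ?_⟩, Subtype.ext hi⟩
          have := hfs i
          rw [hi, j.2, ← mul_assoc, ← sq] at this
          exact (Nat.eq_of_mul_eq_mul_left (by positivity) this).symm⟩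
    rw [coeff_expand_mul, coeff_fiberSeries, coeff_fiberSeries, Nat.card_congr e]
    exact CharTwo.add_self_eq_zero _
  · rw [coeff_expand_of_not_dvd p hp _ hn, add_zero]
    refine coeff_fiberSeries_of_notMem_range ?_
    rintro ⟨i, hi⟩
    obtain ⟨j, rfl⟩ := hrange i ⟨n, hi⟩
    rw [hfs, sq, mul_assoc] at hi
    exact hn ⟨_, (Nat.eq_of_mul_eq_mul_left (Nat.pos_of_ne_zero hp) hi).symm⟩

end FiberSeries

section Theta

/-- The theta series `∑_{a ∈ A} X^(d a²)` modulo `2`. -/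
noncomputable def thetaSeries (A : Set ℕ) (d : ℕ) : (ZMod 2)⟦X⟧ :=
  fiberSeries (ZMod 2) fun a : A => d * (a : ℕ) ^ 2

/-- The binary theta series `∑_{(a, b) ∈ T} X^(d a² + e b²)` modulo `2`. -/
noncomputable def quadSeries (T : Set (ℕ × ℕ)) (d e : ℕ) : (ZMod 2)⟦X⟧ :=
  fiberSeries (ZMod 2) fun x : T => d * x.1.1 ^ 2 + e * x.1.2 ^ 2

/-- The representations of `n` by the form `d x² + e y²` with `(x, y) ∈ T`. -/
def natReps (T : Set (ℕ × ℕ)) (d e n : ℕ) : Set (ℕ × ℕ) :=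
  {x ∈ T | d * x.1 ^ 2 + e * x.2 ^ 2 = n}

lemma coeff_quadSeries (T : Set (ℕ × ℕ)) (d e n : ℕ) :
    coeff n (quadSeries T d e) = ((natReps T d e n).ncard : ZMod 2) := by
  rw [quadSeries, coeff_fiberSeries, ← Nat.card_coe_set_eq]
  exact congrArg _ (Nat.card_congr (Equiv.subtypeSubtypeEquivSubtypeInter (· ∈ T)
    fun x => d * x.1 ^ 2 + e * x.2 ^ 2 = n))

lemma finite_natReps (T : Set (ℕ × ℕ)) {d e : ℕ} (hd : d ≠ 0) (he : e ≠ 0) (n : ℕ) :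
    (natReps T d e n).Finite := by
  refine ((Set.finite_Iic n).prod (Set.finite_Iic n)).subset fun x hx => ?_
  have h₁ := Nat.le_mul_of_pos_left (x.1 ^ 2) (Nat.pos_of_ne_zero hd)
  have h₂ := Nat.le_mul_of_pos_left (x.2 ^ 2) (Nat.pos_of_ne_zero he)
  have h₃ := Nat.le_self_pow two_ne_zero x.1
  have h₄ := Nat.le_self_pow two_ne_zero x.2
  have h₅ := hx.2
  constructor <;> simp only [Set.mem_Iic] <;> omega

lemma injective_mul_sq (A : Set ℕ) {d : ℕ} (hd : d ≠ 0) :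
    Function.Injective fun a : A => d * (a : ℕ) ^ 2 := fun a b h =>
  Subtype.ext (Nat.pow_left_injective two_ne_zero (by simpa [hd] using h))

lemma finite_fiber_mul_sq (A : Set ℕ) {d : ℕ} (hd : d ≠ 0) (n : ℕ) :
    Finite {a : A // d * (a : ℕ) ^ 2 = n} :=
  ((Set.finite_singleton n).preimage (injective_mul_sq A hd).injOn).to_subtype

lemma thetaSeries_mul (A B : Set ℕ) {d e : ℕ} (hd : d ≠ 0) (he : e ≠ 0) :
    thetaSeries A d * thetaSeries B e = quadSeries (A ×ˢ B) d e := by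
  rw [thetaSeries, thetaSeries, fiberSeries_mul (finite_fiber_mul_sq A hd)
    (finite_fiber_mul_sq B he), ← fiberSeries_comp_equiv (Equiv.Set.prod A B)]
  rfl

lemma expand_thetaSeries {m : ℕ} (hm : m ≠ 0) (A : Set ℕ) (d : ℕ) :
    expand m hm (thetaSeries A d) = thetaSeries A (m * d) := by
  simp only [thetaSeries, expand_fiberSeries, mul_assoc]

lemma thetaSeries_pow_two_pow (A : Set ℕ) (d a : ℕ) :
    thetaSeries A d ^ 2 ^ a = thetaSeries A (2 ^ a * d) := by
  rw [← expand_two_pow, expand_thetaSeries]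

lemma thetaSeries_eq_zero {A : Set ℕ} (hA : ∀ a, a ∉ A) (d : ℕ) : thetaSeries A d = 0 := by
  ext n
  exact coeff_fiberSeries_of_notMem_range fun ⟨a, _⟩ => hA a a.2

variable {p : ℕ} [NeZero p]

lemma hecke_thetaSeries_eq_zero (hp : p.Prime) {A : Set ℕ} {d : ℕ} (hd : ¬ p ∣ d)
    (hA : ∀ a, p * a ∈ A ↔ a ∈ A) : hecke p (thetaSeries A d) = 0 := by
  refine hecke_fiberSeries_eq_zero (s := fun a => ⟨p * a, (hA a).2 a.2⟩) ?_ ?_ ?_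
  · exact fun a b h => Subtype.ext (Nat.eq_of_mul_eq_mul_left hp.pos (congrArg Subtype.val h))
  · intro a
    ring
  · rintro ⟨a, ha⟩ h
    obtain ⟨a, rfl⟩ := hp.dvd_of_dvd_pow ((hp.dvd_mul.1 h).resolve_left hd)
    exact ⟨⟨a, (hA a).1 ha⟩, rfl⟩

lemma hecke_quadSeries_eq_zero_of_anisotropic {T : Set (ℕ × ℕ)} {d e : ℕ}
    (haniso : ∀ a b : ZMod p, d * a ^ 2 + e * b ^ 2 = 0 → a = 0 ∧ b = 0)
    (hT : ∀ a b, (p * a, p * b) ∈ T ↔ (a, b) ∈ T) : hecke p (quadSeries T d e) = 0 := by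
  have hp := Nat.pos_of_ne_zero (NeZero.ne p)
  refine hecke_fiberSeries_eq_zero (s := fun x => ⟨(p * x.1.1, p * x.1.2), (hT _ _).2 x.2⟩) ?_ ?_ ?_
  · rintro ⟨⟨a, b⟩, _⟩ ⟨⟨c, d⟩, _⟩ h
    simpa [hp.ne'] using h
  · intro x
    ring
  · rintro ⟨⟨a, b⟩, hx⟩ h
    rw [← ZMod.natCast_eq_zero_iff] at h
    push_cast at h
    obtain ⟨ha, hb⟩ := haniso a b h
    obtain ⟨a, rfl⟩ := (ZMod.natCast_eq_zero_iff _ _).1 ha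
    obtain ⟨b, rfl⟩ := (ZMod.natCast_eq_zero_iff _ _).1 hb
    exact ⟨⟨(a, b), (hT a b).1 hx⟩, rfl⟩

lemma hecke_thetaSeries_mul_of_anisotropic {A B : Set ℕ} {d e : ℕ} (hd : d ≠ 0) (he : e ≠ 0)
    (haniso : ∀ a b : ZMod p, d * a ^ 2 + e * b ^ 2 = 0 → a = 0 ∧ b = 0)
    (hA : ∀ a, p * a ∈ A ↔ a ∈ A) (hB : ∀ b, p * b ∈ B ↔ b ∈ B) :
    hecke p (thetaSeries A d * thetaSeries B e) = 0 := by
  rw [thetaSeries_mul A B hd he]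
  exact hecke_quadSeries_eq_zero_of_anisotropic haniso fun a b => and_congr (hA a) (hB b)

end Theta

section Splitting

variable {T T' : Set (ℕ × ℕ)} {D q n : ℕ} {u v : ℤ}

/-- The integral representations of `n` by `x² + D y²` with `(|x|, |y|) ∈ T`. -/
def intReps (T : Set (ℕ × ℕ)) (D n : ℕ) : Set (ℤ × ℤ) :=
  Prod.map Int.natAbs Int.natAbs ⁻¹' natReps T 1 D n

lemma mem_intReps {z : ℤ × ℤ} :
    z ∈ intReps T D n ↔ (z.1.natAbs, z.2.natAbs) ∈ T ∧ z.1 ^ 2 + D * z.2 ^ 2 = n := by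
  refine and_congr_right fun _ => ?_
  zify
  simp

lemma ncard_preimage_eq_mul {α β : Type*} {f : α → β} {S : Set β} {k : ℕ} (hS : S.Finite)
    (hk : k ≠ 0) (h : ∀ y ∈ S, (f ⁻¹' {y}).ncard = k) : (f ⁻¹' S).ncard = k * S.ncard := by
  induction S, hS using Set.Finite.induction_on with
  | empty => simp
  | @insert a S ha hS ih =>
    have hfin : ∀ y ∈ insert a S, (f ⁻¹' {y}).Finite := fun y hy =>
      Set.finite_of_ncard_ne_zero (h y hy ▸ hk)
    have hfinS : (f ⁻¹' S).Finite := hS.preimage' fun y hy => hfin y (.inr hy)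
    rw [Set.insert_eq, Set.preimage_union, Set.ncard_union_eq _ (hfin a (.inl rfl)) hfinS,
      h a (.inl rfl), ih fun y hy => h y (.inr hy), Set.ncard_union_eq (by simpa) (by simp) hS,
      Set.ncard_singleton, mul_add, mul_one]
    exact (Set.disjoint_singleton_left.2 ha).preimage f

lemma preimage_natAbs_singleton (a : ℕ) : Int.natAbs ⁻¹' {a} = {(a : ℤ), -(a : ℤ)} := by
  ext z
  simp [Int.natAbs_eq_iff]

lemma preimage_natAbs_prod (x : ℕ × ℕ) : Prod.map Int.natAbs Int.natAbs ⁻¹' {x} =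
    {(x.1 : ℤ), -(x.1 : ℤ)} ×ˢ {(x.2 : ℤ), -(x.2 : ℤ)} := by
  rw [← Set.singleton_prod_singleton, Set.preimage_prod_map_prod, preimage_natAbs_singleton,
    preimage_natAbs_singleton]

lemma finite_intReps (T : Set (ℕ × ℕ)) (hD : D ≠ 0) (n : ℕ) : (intReps T D n).Finite := by
  refine (finite_natReps T one_ne_zero hD n).preimage' fun x _ => ?_
  rw [preimage_natAbs_prod]
  exact Set.toFinite _

lemma ncard_intReps (hD : D ≠ 0) (hT : ∀ x ∈ T, x.1 ≠ 0) :
    (intReps T D n).ncard = 2 * (natReps T 1 D n ∩ {x | x.2 = 0}).ncard +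
      4 * (natReps T 1 D n \ {x | x.2 = 0}).ncard := by
  have hfin := finite_natReps T one_ne_zero hD n
  have hpair {a : ℕ} (ha : a ≠ 0) : ({(a : ℤ), -(a : ℤ)} : Set ℤ).ncard = 2 :=
    Set.ncard_pair (by omega)
  rw [← ncard_preimage_eq_mul (f := Prod.map Int.natAbs Int.natAbs) (k := 2)
    (hfin.inter_of_left _) two_ne_zero, ← ncard_preimage_eq_mul
    (f := Prod.map Int.natAbs Int.natAbs) (k := 4) hfin.sdiff four_ne_zero]
  · exact (Set.ncard_inter_add_ncard_sdiff_eq_ncard _ _ (finite_intReps T hD n)).symm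
  · rintro x ⟨hx, hx₂ : x.2 ≠ 0⟩
    rw [preimage_natAbs_prod, Set.ncard_prod, hpair (hT x hx.1), hpair hx₂]
  · rintro x ⟨hx, hx₂ : x.2 = 0⟩
    rw [preimage_natAbs_prod, Set.ncard_prod, hpair (hT x hx.1), hx₂]
    simp

lemma ncard_intReps_of_ne_zero (hD : D ≠ 0) (hT : ∀ x ∈ T, x.1 ≠ 0 ∧ x.2 ≠ 0) :
    (intReps T D n).ncard = 4 * (natReps T 1 D n).ncard := by
  have haxis : Disjoint (natReps T 1 D n) {x | x.2 = 0} :=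
    Set.disjoint_left.2 fun x hx => (hT x hx.1).2
  rw [ncard_intReps hD fun x hx => (hT x hx).1, haxis.inter_eq, haxis.sdiff_eq_left,
    Set.ncard_empty, mul_zero, zero_add]

-- Multiplication by `u + v √(-D)`, an element of norm `q`.
lemma ncard_intReps_dvd_sub (hq : q ≠ 0) (huv : u ^ 2 + D * v ^ 2 = q) (hvq : IsCoprime (q : ℤ) v)
    (hT : ∀ c d : ℤ, ((u * c - D * v * d).natAbs, (v * c + u * d).natAbs) ∈ T ↔
      (c.natAbs, d.natAbs) ∈ T') (n : ℕ) :
    {z ∈ intReps T D (q * n) | (q : ℤ) ∣ u * z.2 - v * z.1}.ncard = (intReps T' D n).ncard := by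
  have hq' : (q : ℤ) ≠ 0 := by exact_mod_cast hq
  have hnorm (c d : ℤ) : (u * c - D * v * d) ^ 2 + D * (v * c + u * d) ^ 2 =
      q * (c ^ 2 + D * d ^ 2) := by
    rw [← huv]
    ring
  have hinj : Function.Injective fun y : ℤ × ℤ => (u * y.1 - D * v * y.2, v * y.1 + u * y.2) := by
    rintro ⟨c, d⟩ ⟨c', d'⟩ h
    obtain ⟨h₁, h₂⟩ := Prod.mk.inj h
    refine Prod.ext (mul_left_cancel₀ hq' ?_) (mul_left_cancel₀ hq' ?_) <;> rw [← huv]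
    · linear_combination u * h₁ + D * v * h₂
    · linear_combination u * h₂ - v * h₁
  rw [← Set.ncard_image_of_injective (intReps T' D n) hinj]
  congr 1
  ext ⟨a, b⟩
  simp only [Set.mem_ofPred_eq, Set.mem_image, mem_intReps, Prod.exists, Prod.mk.injEq]
  constructor
  · rintro ⟨⟨hz, hab⟩, d, hd⟩
    obtain ⟨c, hc⟩ : (q : ℤ) ∣ u * a + D * v * b := hvq.dvd_of_dvd_mul_left
      ⟨b - u * d, by linear_combination (-u) * hd + b * huv⟩
    have ha : u * c - D * v * d = a := mul_left_cancel₀ hq' (by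
      linear_combination (-u) * hc + D * v * hd + a * huv)
    have hb : v * c + u * d = b := mul_left_cancel₀ hq' (by
      linear_combination (-v) * hc - u * hd + b * huv)
    refine ⟨c, d, ⟨(hT c d).1 (by rwa [ha, hb]), mul_left_cancel₀ hq' ?_⟩, ha, hb⟩
    rw [← hnorm, ha, hb, hab, Nat.cast_mul]
  · rintro ⟨c, d, ⟨hz, hcd⟩, rfl, rfl⟩
    refine ⟨⟨(hT c d).2 hz, ?_⟩, d, ?_⟩
    · rw [hnorm, hcd, Nat.cast_mul]
    · rw [← huv]
      ring

lemma ncard_intReps_dvd_add (T : Set (ℕ × ℕ)) (D N : ℕ) (q u v : ℤ) :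
    {z ∈ intReps T D N | q ∣ u * z.2 + v * z.1}.ncard =
      {z ∈ intReps T D N | q ∣ u * z.2 - v * z.1}.ncard := by
  have hconj : Function.Injective fun z : ℤ × ℤ => (-z.1, z.2) := fun z w h => by
    simpa [Prod.ext_iff] using h
  rw [← Set.ncard_image_of_injective _ hconj]
  congr 1
  ext ⟨a, b⟩
  simp only [Set.mem_image, Set.mem_ofPred_eq, mem_intReps, Prod.exists, Prod.mk.injEq]
  constructor
  · rintro ⟨c, d, h, rfl, rfl⟩
    simpa using h
  · intro h
    exact ⟨-a, b, by simpa [sub_eq_add_neg] using h, neg_neg a, rfl⟩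

lemma dvd_sub_or_dvd_add (hq : q.Prime) (huv : u ^ 2 + D * v ^ 2 = q) {z : ℤ × ℤ}
    (hz : z ∈ intReps T D (q * n)) :
    (q : ℤ) ∣ u * z.2 - v * z.1 ∨ (q : ℤ) ∣ u * z.2 + v * z.1 := by
  have hz := (mem_intReps.1 hz).2
  rw [Nat.cast_mul] at hz
  refine (Nat.prime_iff_prime_int.1 hq).dvd_or_dvd ⟨z.2 ^ 2 - v ^ 2 * n, ?_⟩
  linear_combination z.2 ^ 2 * huv - v ^ 2 * hz

lemma dvd_sub_and_dvd_add_iff (hq : q.Prime) (hq2 : q ≠ 2) (hu : ¬ (q : ℤ) ∣ u)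
    (hv : ¬ (q : ℤ) ∣ v) (z : ℤ × ℤ) :
    ((q : ℤ) ∣ u * z.2 - v * z.1 ∧ (q : ℤ) ∣ u * z.2 + v * z.1) ↔
      (q : ℤ) ∣ z.1 ∧ (q : ℤ) ∣ z.2 := by
  have hq' := Nat.prime_iff_prime_int.1 hq
  have h2 : ¬ (q : ℤ) ∣ 2 := by
    exact_mod_cast fun h => hq2 ((Nat.prime_dvd_prime_iff_eq hq Nat.prime_two).1 h)
  constructor
  · rintro ⟨hsub, hadd⟩
    have h₁ : (q : ℤ) ∣ 2 * (v * z.1) := (dvd_sub hadd hsub).trans (dvd_of_eq (by ring))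
    have h₂ : (q : ℤ) ∣ 2 * (u * z.2) := (dvd_add hadd hsub).trans (dvd_of_eq (by ring))
    exact ⟨(hq'.dvd_or_dvd ((hq'.dvd_or_dvd h₁).resolve_left h2)).resolve_left hv,
      (hq'.dvd_or_dvd ((hq'.dvd_or_dvd h₂).resolve_left h2)).resolve_left hu⟩
  · rintro ⟨h₁, h₂⟩
    exact ⟨(h₂.mul_left u).sub (h₁.mul_left v), (h₂.mul_left u).add (h₁.mul_left v)⟩

lemma ncard_intReps_mul_add (hD : D ≠ 0) (hq : q.Prime) (hq2 : q ≠ 2)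
    (huv : u ^ 2 + D * v ^ 2 = q) (hu : ¬ (q : ℤ) ∣ u) (hv : ¬ (q : ℤ) ∣ v)
    (hT : ∀ c d : ℤ, ((u * c - D * v * d).natAbs, (v * c + u * d).natAbs) ∈ T ↔
      (c.natAbs, d.natAbs) ∈ T') (n : ℕ) :
    (intReps T D (q * n)).ncard +
      {z ∈ intReps T D (q * n) | (q : ℤ) ∣ z.1 ∧ (q : ℤ) ∣ z.2}.ncard =
      2 * (intReps T' D n).ncard := by
  have hvq := (Nat.prime_iff_prime_int.1 hq).coprime_iff_not_dvd.2 hv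
  have hfin := finite_intReps T hD (q * n)
  have hsub := ncard_intReps_dvd_sub hq.ne_zero huv hvq hT n
  have hadd := (ncard_intReps_dvd_add T D (q * n) q u v).trans hsub
  rw [two_mul]
  nth_rewrite 1 [← hsub]
  rw [← hadd, ← Set.ncard_union_add_ncard_inter _ _ (hfin.sep _) (hfin.sep _), ← Set.sep_or,
    ← Set.sep_and, Set.sep_eq_self_iff_mem_true.2 fun z hz => dvd_sub_or_dvd_add hq huv hz]
  simp only [dvd_sub_and_dvd_add_iff hq hq2 hu hv]

lemma ncard_intReps_mul_dvd (hq : q ≠ 0) (hT : ∀ a b, (q * a, q * b) ∈ T ↔ (a, b) ∈ T) (n : ℕ) :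
    {z ∈ intReps T D (q * (q * n)) | (q : ℤ) ∣ z.1 ∧ (q : ℤ) ∣ z.2}.ncard =
      (intReps T D n).ncard := by
  have hq' : (q : ℤ) ≠ 0 := by exact_mod_cast hq
  have hinj : Function.Injective fun z : ℤ × ℤ => (q * z.1, q * z.2) := fun z w h => by
    simpa [Prod.ext_iff, hq] using h
  have hmem (c d : ℤ) : (q * c, q * d) ∈ intReps T D (q * (q * n)) ↔ (c, d) ∈ intReps T D n := by
    simp only [mem_intReps, Int.natAbs_mul, Int.natAbs_natCast, hT]
    refine and_congr_right fun _ => ?_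
    push_cast
    rw [show (q * c) ^ 2 + D * (q * d) ^ 2 = q * (q * (c ^ 2 + D * d ^ 2)) by ring,
      mul_right_inj' hq', mul_right_inj' hq']
  rw [← Set.ncard_image_of_injective (intReps T D n) hinj]
  congr 1
  ext ⟨a, b⟩
  simp only [Set.mem_ofPred_eq, Set.mem_image, Prod.exists, Prod.mk.injEq]
  constructor
  · rintro ⟨hz, ⟨c, rfl⟩, ⟨d, rfl⟩⟩
    exact ⟨c, d, (hmem c d).1 hz, rfl, rfl⟩
  · rintro ⟨c, d, hz, rfl, rfl⟩
    exact ⟨(hmem c d).2 hz, dvd_mul_right _ _, dvd_mul_right _ _⟩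

lemma sep_intReps_dvd_eq_empty (hq : q ≠ 0) (hn : ¬ q ∣ n) :
    {z ∈ intReps T D (q * n) | (q : ℤ) ∣ z.1 ∧ (q : ℤ) ∣ z.2} = ∅ := by
  refine Set.eq_empty_of_forall_notMem ?_
  rintro ⟨_, _⟩ ⟨hz, ⟨c, rfl⟩, ⟨d, rfl⟩⟩
  have hq' : (q : ℤ) ≠ 0 := by exact_mod_cast hq
  refine hn (Int.natCast_dvd_natCast.1 ⟨c ^ 2 + D * d ^ 2, mul_left_cancel₀ hq' ?_⟩)
  rw [← Nat.cast_mul, ← (mem_intReps.1 hz).2]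
  ring

lemma coeff_thetaSeries_axis (T : Set (ℕ × ℕ)) (D n : ℕ) :
    coeff n (thetaSeries {a | (a, 0) ∈ T} 1) =
      ((natReps T 1 D n ∩ {x | x.2 = 0}).ncard : ZMod 2) := by
  have himage : natReps T 1 D n ∩ {x | x.2 = 0} =
      (fun a => (a, 0)) '' {a | (a, 0) ∈ T ∧ 1 * a ^ 2 = n} := by
    ext ⟨a, b⟩
    simp only [natReps, Set.mem_inter_iff, Set.mem_ofPred_eq, Set.mem_image, Prod.mk.injEq]
    constructor
    · rintro ⟨⟨hab, h⟩, rfl⟩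
      exact ⟨a, ⟨hab, by simpa using h⟩, rfl, rfl⟩
    · rintro ⟨a, ⟨ha, h⟩, rfl, rfl⟩
      exact ⟨⟨ha, by simpa using h⟩, rfl⟩
  rw [himage, Set.ncard_image_of_injective _ (Prod.mk_left_injective 0), thetaSeries,
    coeff_fiberSeries, ← Nat.card_coe_set_eq]
  exact congrArg _ (Nat.card_congr (Equiv.subtypeSubtypeEquivSubtypeInter (fun a => (a, 0) ∈ T)
    fun a => 1 * a ^ 2 = n))

lemma hecke_quadSeries_of_split [NeZero q] (hD : D ≠ 0) (hq : q.Prime) (hq2 : q ≠ 2)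
    (huv : u ^ 2 + D * v ^ 2 = q) (hu : ¬ (q : ℤ) ∣ u) (hv : ¬ (q : ℤ) ∣ v)
    (hT0 : ∀ x ∈ T, x.1 ≠ 0 ∧ x.2 ≠ 0) (hT0' : ∀ x ∈ T', x.1 ≠ 0)
    (hTq : ∀ a b, (q * a, q * b) ∈ T ↔ (a, b) ∈ T)
    (hT : ∀ c d : ℤ, ((u * c - D * v * d).natAbs, (v * c + u * d).natAbs) ∈ T ↔
      (c.natAbs, d.natAbs) ∈ T') :
    hecke q (quadSeries T 1 D) = thetaSeries {a | (a, 0) ∈ T'} 1 := by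
  ext n
  have key := ncard_intReps_mul_add hD hq hq2 huv hu hv hT n
  rw [ncard_intReps_of_ne_zero hD hT0, ncard_intReps hD hT0'] at key
  rw [hecke, map_add, coeff_decimate, coeff_thetaSeries_axis T' D, coeff_quadSeries]
  by_cases hn : q ∣ n
  · obtain ⟨n, rfl⟩ := hn
    rw [ncard_intReps_mul_dvd hq.ne_zero hTq, ncard_intReps_of_ne_zero hD hT0] at key
    rw [coeff_expand_mul, coeff_quadSeries, ← Nat.cast_add, ZMod.natCast_eq_natCast_iff, Nat.ModEq]
    omega
  · rw [sep_intReps_dvd_eq_empty hq.ne_zero hn, Set.ncard_empty] at key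
    rw [coeff_expand_of_not_dvd q _ _ hn, add_zero, ZMod.natCast_eq_natCast_iff, Nat.ModEq]
    omega

lemma hecke_thetaSeries_mul_of_split [NeZero q] {A B : Set ℕ} (hD : D ≠ 0) (hq : q.Prime)
    (hq2 : q ≠ 2) (huv : u ^ 2 + D * v ^ 2 = q) (hu : ¬ (q : ℤ) ∣ u) (hv : ¬ (q : ℤ) ∣ v)
    (hA0 : 0 ∉ A) (hB0 : 0 ∉ B) (hA : ∀ a, q * a ∈ A ↔ a ∈ A) (hB : ∀ b, q * b ∈ B ↔ b ∈ B)
    (hT0' : ∀ x ∈ T', x.1 ≠ 0)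
    (hT : ∀ c d : ℤ, (u * c - D * v * d).natAbs ∈ A ∧ (v * c + u * d).natAbs ∈ B ↔
      (c.natAbs, d.natAbs) ∈ T') :
    hecke q (thetaSeries A 1 * thetaSeries B D) = thetaSeries {a | (a, 0) ∈ T'} 1 := by
  rw [thetaSeries_mul A B one_ne_zero hD]
  exact hecke_quadSeries_of_split hD hq hq2 huv hu hv
    (fun x hx => ⟨fun h => hA0 (h ▸ hx.1), fun h => hB0 (h ▸ hx.2)⟩) hT0'
    (fun a b => and_congr (hA a) (hB b)) hT

end Splitting

section CoprimeToSix

/-- The natural numbers coprime to `6`. -/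
def coprimeToSix : Set ℕ := {a | ¬ 2 ∣ a ∧ ¬ 3 ∣ a}

/-- The odd natural numbers. -/
def oddNat : Set ℕ := {a | ¬ 2 ∣ a}

lemma ncard_intReps_four_mul (n : ℕ) :
    (intReps (coprimeToSix ×ˢ oddNat) 3 (4 * n)).ncard =
      2 * (intReps {x | ¬ 2 ∣ x.1 + x.2 ∧ ¬ 3 ∣ x.1} 3 n).ncard := by
  have hfin := finite_intReps (coprimeToSix ×ˢ oddNat) three_ne_zero (4 * n)
  have hsub := ncard_intReps_dvd_sub (T := coprimeToSix ×ˢ oddNat)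
    (T' := {x | ¬ 2 ∣ x.1 + x.2 ∧ ¬ 3 ∣ x.1}) (D := 3) (u := 1) (v := 1) (q := 4) four_ne_zero
    (by norm_num) isCoprime_one_right
    (by intro c d; simp only [Set.mem_prod, coprimeToSix, oddNat, Set.mem_ofPred_eq]; omega) n
  have hadd := (ncard_intReps_dvd_add (coprimeToSix ×ˢ oddNat) 3 (4 * n) (4 : ℕ) 1 1).trans hsub
  have hxor : ∀ z ∈ intReps (coprimeToSix ×ˢ oddNat) 3 (4 * n),
      Xor (((4 : ℕ) : ℤ) ∣ 1 * z.2 - 1 * z.1) (((4 : ℕ) : ℤ) ∣ 1 * z.2 + 1 * z.1) := by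
    intro z hz
    have hodd := (mem_intReps.1 hz).1
    simp only [Set.mem_prod, coprimeToSix, oddNat, Set.mem_ofPred_eq] at hodd
    simp only [xor_iff_iff_not]
    omega
  rw [two_mul]
  nth_rewrite 1 [← hsub]
  rw [← hadd, ← Set.ncard_union_eq _ (hfin.sep _) (hfin.sep _), ← Set.sep_or,
    Set.sep_eq_self_iff_mem_true.2 fun z hz => (hxor z hz).or]
  exact Set.disjoint_left.2 fun z hz hz' => xor_iff_iff_not.1 (hxor z hz.1) |>.1 hz.2 hz'.2

-- Count the representations of `4n` by `x² + 3y²` through the factor `1 + √(-3)` of norm `4`.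
lemma quadSeries_one_three :
    quadSeries (coprimeToSix ×ˢ oddNat) 1 3 = thetaSeries coprimeToSix 4 := by
  rw [← mul_one 4, ← expand_thetaSeries four_ne_zero]
  ext N
  rw [coeff_quadSeries]
  by_cases hN : 4 ∣ N
  · obtain ⟨n, rfl⟩ := hN
    have haxis := coeff_thetaSeries_axis {x | ¬ 2 ∣ x.1 + x.2 ∧ ¬ 3 ∣ x.1} 3 n
    have key := ncard_intReps_four_mul n
    rw [ncard_intReps_of_ne_zero three_ne_zero, ncard_intReps three_ne_zero] at key
    · rw [coeff_expand_mul]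
      refine Eq.trans ?_ haxis.symm
      rw [ZMod.natCast_eq_natCast_iff, Nat.ModEq]
      omega
    · rintro x ⟨_, hx⟩ h
      exact hx (h ▸ dvd_zero 3)
    · rintro x ⟨⟨hx, _⟩, hx'⟩
      exact ⟨fun h => hx (h ▸ dvd_zero 2), fun h => hx' (h ▸ dvd_zero 2)⟩
  · suffices hempty : natReps (coprimeToSix ×ˢ oddNat) 1 3 N = ∅ by
      rw [coeff_expand_of_not_dvd 4 _ _ hN, hempty, Set.ncard_empty, Nat.cast_zero]
    refine Set.eq_empty_of_forall_notMem ?_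
    rintro ⟨a, b⟩ ⟨⟨⟨ha, _⟩, hb⟩, h⟩
    obtain ⟨i, rfl : a = 2 * i + 1⟩ := Nat.not_even_iff_odd.1 (ha ∘ Even.two_dvd)
    obtain ⟨j, rfl : b = 2 * j + 1⟩ := Nat.not_even_iff_odd.1 (hb ∘ Even.two_dvd)
    refine hN ⟨i ^ 2 + i + 3 * (j ^ 2 + j) + 1, h.symm.trans ?_⟩
    ring

/-- The theta series `∑ X^(a²)` over `a` coprime to `6`; modulo `2` it is `X ∏ (1 - X^(24n))`
by Euler's pentagonal number theorem. -/
noncomputable def etaSeries : (ZMod 2)⟦X⟧ := thetaSeries coprimeToSix 1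

lemma coeff_one_etaSeries : coeff 1 etaSeries = 1 :=
  coeff_fiberSeries_of_injective (injective_mul_sq coprimeToSix one_ne_zero)
    ⟨1, by simp [coprimeToSix]⟩

lemma etaSeries_ne_zero : etaSeries ≠ 0 := fun h => by
  simpa [h] using coeff_one_etaSeries

lemma etaSeries_pow_two_pow (a : ℕ) : etaSeries ^ 2 ^ a = thetaSeries coprimeToSix (2 ^ a) := by
  rw [etaSeries, thetaSeries_pow_two_pow, mul_one]

-- The product of the two sides with `etaSeries` is `∑ X^(4a²)`.
lemma etaSeries_pow_three : etaSeries ^ 3 = thetaSeries oddNat 3 := by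
  refine mul_left_cancel₀ etaSeries_ne_zero ?_
  rw [← pow_succ']
  refine (etaSeries_pow_two_pow 2).trans ?_
  rw [etaSeries, thetaSeries_mul _ _ one_ne_zero three_ne_zero, quadSeries_one_three]
  norm_num

end CoprimeToSix

section Hecke17

lemma mul_mem_coprimeToSix_iff (a : ℕ) : 17 * a ∈ coprimeToSix ↔ a ∈ coprimeToSix := by
  simp only [coprimeToSix, Set.mem_ofPred_eq]
  omega

lemma mul_mem_oddNat_iff (a : ℕ) : 17 * a ∈ oddNat ↔ a ∈ oddNat := by
  simp only [oddNat, Set.mem_ofPred_eq]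
  omega

lemma hecke_etaSeries : hecke 17 etaSeries = 0 :=
  hecke_thetaSeries_eq_zero (by norm_num) (by norm_num) mul_mem_coprimeToSix_iff

lemma hecke_etaSeries_pow_three : hecke 17 (etaSeries ^ 3) = 0 := by
  rw [etaSeries_pow_three]
  exact hecke_thetaSeries_eq_zero (by norm_num) (by norm_num) mul_mem_oddNat_iff

lemma hecke_etaSeries_pow_five : hecke 17 (etaSeries ^ 5) = 0 := by
  rw [show 5 = 1 + 2 ^ 2 from rfl, pow_add, pow_one, etaSeries_pow_two_pow, etaSeries]
  refine (hecke_thetaSeries_mul_of_split (u := 1) (v := 2)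
    (T' := {x | ¬ 2 ∣ x.1 ∧ ¬ 2 ∣ x.2 ∧ (3 ∣ x.1 ↔ ¬ 3 ∣ x.2)}) (by norm_num) (by norm_num)
    (by norm_num) (by norm_num) (by norm_num) (by norm_num) (by simp [coprimeToSix])
    (by simp [coprimeToSix]) mul_mem_coprimeToSix_iff mul_mem_coprimeToSix_iff ?_ ?_).trans
    (thetaSeries_eq_zero ?_ 1)
  · rintro x ⟨hx, -⟩ h
    exact hx (h ▸ dvd_zero 2)
  · intro c d
    simp only [coprimeToSix, Set.mem_ofPred_eq]
    grind
  · intro a h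
    exact h.2.1 (dvd_zero 2)

lemma hecke_etaSeries_pow_nine : hecke 17 (etaSeries ^ 9) = 0 := by
  rw [show 9 = 1 + 2 ^ 3 from rfl, pow_add, pow_one, etaSeries_pow_two_pow, etaSeries]
  refine (hecke_thetaSeries_mul_of_split (u := 3) (v := 1)
    (T' := {x | ¬ 2 ∣ x.1 ∧ 2 ∣ x.2 ∧ ¬ 3 ∣ x.1 ∧ ¬ 3 ∣ x.2}) (by norm_num) (by norm_num)
    (by norm_num) (by norm_num) (by norm_num) (by norm_num) (by simp [coprimeToSix])
    (by simp [coprimeToSix]) mul_mem_coprimeToSix_iff mul_mem_coprimeToSix_iff ?_ ?_).trans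
    (thetaSeries_eq_zero ?_ 1)
  · rintro x ⟨hx, -⟩ h
    exact hx (h ▸ dvd_zero 2)
  · intro c d
    simp only [coprimeToSix, Set.mem_ofPred_eq]
    omega
  · intro a h
    exact h.2.2.2 (dvd_zero 3)

lemma hecke_etaSeries_pow_fifteen : hecke 17 (etaSeries ^ 15) = 0 := by
  have hprod : etaSeries ^ 15 =
      expand 3 three_ne_zero (thetaSeries oddNat 1 * thetaSeries oddNat 4) := by
    rw [map_mul, expand_thetaSeries, expand_thetaSeries, show 15 = 3 + 3 * 2 ^ 2 from rfl, pow_add,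
      pow_mul, etaSeries_pow_three, thetaSeries_pow_two_pow]
    norm_num
  rw [hprod, hecke_expand_of_coprime three_ne_zero (by norm_num)]
  have hzero := (hecke_thetaSeries_mul_of_split (q := 17) (D := 4) (u := 1) (v := 2)
    (A := oddNat) (B := oddNat) (T' := oddNat ×ˢ oddNat) (by norm_num) (by norm_num)
    (by norm_num) (by norm_num) (by norm_num) (by norm_num) (by simp [oddNat])
    (by simp [oddNat]) mul_mem_oddNat_iff mul_mem_oddNat_iff ?_ ?_).trans
    (thetaSeries_eq_zero ?_ 1)
  · rw [hzero, map_zero]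
  · rintro x ⟨hx, -⟩ h
    exact hx (h ▸ dvd_zero 2)
  · intro c d
    simp only [oddNat, Set.mem_prod, Set.mem_ofPred_eq]
    omega
  · intro a h
    exact h.2 (dvd_zero 2)

lemma hecke_etaSeries_pow_seventeen : hecke 17 (etaSeries ^ 17) = etaSeries := by
  have hprod : etaSeries ^ 17 = thetaSeries coprimeToSix 1 * thetaSeries coprimeToSix 16 :=
    (pow_succ' _ 16).trans (congrArg (etaSeries * ·) (etaSeries_pow_two_pow 4))
  rw [hprod]
  refine (hecke_thetaSeries_mul_of_split (q := 17) (u := 1) (v := 1)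
    (T' := {x | ¬ 2 ∣ x.1 ∧ 2 ∣ x.2 ∧ (3 ∣ x.1 ↔ ¬ 3 ∣ x.2)}) (by norm_num) (by norm_num)
    (by norm_num) (by norm_num) (by norm_num) (by norm_num) (by simp [coprimeToSix])
    (by simp [coprimeToSix]) mul_mem_coprimeToSix_iff mul_mem_coprimeToSix_iff ?_ ?_).trans
    (congrArg (thetaSeries · 1) ?_)
  · rintro x ⟨hx, -⟩ h
    exact hx (h ▸ dvd_zero 2)
  · intro c d
    simp only [coprimeToSix, Set.mem_ofPred_eq]
    grind
  · ext a
    simp [coprimeToSix]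

lemma hecke_etaSeries_pow_seven : hecke 17 (etaSeries ^ 7) = 0 := by
  rw [show 7 = 3 + 2 ^ 2 from rfl, pow_add, etaSeries_pow_three, etaSeries_pow_two_pow]
  exact hecke_thetaSeries_mul_of_anisotropic (by norm_num) (by norm_num) (by decide)
    mul_mem_oddNat_iff mul_mem_coprimeToSix_iff

lemma hecke_etaSeries_pow_eleven : hecke 17 (etaSeries ^ 11) = 0 := by
  rw [show 11 = 3 + 2 ^ 3 from rfl, pow_add, etaSeries_pow_three, etaSeries_pow_two_pow]
  exact hecke_thetaSeries_mul_of_anisotropic (by norm_num) (by norm_num) (by decide)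
    mul_mem_oddNat_iff mul_mem_coprimeToSix_iff

lemma hecke_etaSeries_pow_thirteen : hecke 17 (etaSeries ^ 13) = 0 := by
  rw [show 13 = 1 + 3 * 2 ^ 2 from rfl, pow_add, pow_one, pow_mul, etaSeries_pow_three,
    thetaSeries_pow_two_pow, etaSeries]
  exact hecke_thetaSeries_mul_of_anisotropic (by norm_num) (by norm_num) (by decide)
    mul_mem_coprimeToSix_iff mul_mem_oddNat_iff

lemma hecke_etaSeries_pow {k : ℕ} (hk : 0 < k) (hk' : k < 17) : hecke 17 (etaSeries ^ k) = 0 := by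
  induction k using Nat.strong_induction_on with
  | h k ih =>
    rcases k.even_or_odd with heven | hodd
    · obtain ⟨j, rfl⟩ := heven.two_dvd
      rw [mul_comm, pow_mul]
      exact hecke_sq_eq_zero (by decide) (ih j (by omega) (by omega) (by omega))
    · obtain rfl | rfl | rfl | rfl | rfl | rfl | rfl | rfl :
          k = 1 ∨ k = 3 ∨ k = 5 ∨ k = 7 ∨ k = 9 ∨ k = 11 ∨ k = 13 ∨ k = 15 := by
        obtain ⟨j, rfl⟩ := hodd
        omega
      · rw [pow_one, hecke_etaSeries]
      exacts [hecke_etaSeries_pow_three, hecke_etaSeries_pow_five, hecke_etaSeries_pow_seven,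
        hecke_etaSeries_pow_nine, hecke_etaSeries_pow_eleven, hecke_etaSeries_pow_thirteen,
        hecke_etaSeries_pow_fifteen]

end Hecke17

section EulerProduct

open scoped WithPiTopology

variable {R S : Type*} [CommRing R] [CommRing S]

lemma map_pentagonalSeries (φ : R →+* S) : map φ (pentagonalSeries R) = pentagonalSeries S := by
  ext n
  by_cases hn : n ∈ Set.range pentagonal
  · obtain ⟨k, rfl⟩ := hn
    rw [coeff_map, coeff_pentagonalSeries_pentagonal, coeff_pentagonalSeries_pentagonal,
      map_intCast]
  · rw [coeff_map, coeff_pentagonalSeries_eq_zero R hn, coeff_pentagonalSeries_eq_zero S hn,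
      map_zero]

lemma pentagonalSeries_zmod_two :
    pentagonalSeries (ZMod 2) = fiberSeries (ZMod 2) pentagonal := by
  ext n
  by_cases hn : n ∈ Set.range pentagonal
  · obtain ⟨k, rfl⟩ := hn
    rw [coeff_pentagonalSeries_pentagonal, coeff_fiberSeries_of_injective pentagonal_injective]
    obtain h | h := Int.units_eq_one_or k.negOnePow <;> rw [h] <;> decide
  · rw [coeff_pentagonalSeries_eq_zero _ hn, coeff_fiberSeries_of_notMem_range hn]

lemma sq_six_mul_sub_one (k : ℤ) : (6 * k - 1).natAbs ^ 2 = 24 * pentagonal k + 1 := by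
  have := two_mul_natCast_pentagonal k
  zify
  rw [sq_abs]
  linear_combination -12 * this

/-- Every natural number coprime to `6` is `|6k - 1|` for a unique integer `k`. -/
noncomputable def coprimeToSixEquiv : ℤ ≃ coprimeToSix :=
  .ofBijective (fun k => ⟨(6 * k - 1).natAbs, by
      simp only [coprimeToSix, Set.mem_ofPred_eq]
      omega⟩)
    ⟨fun k l h => by
      have := congrArg Subtype.val h
      simp only at this
      omega, fun ⟨a, ha⟩ => by
      simp only [coprimeToSix, Set.mem_ofPred_eq] at ha
      obtain h | h : a % 6 = 1 ∨ a % 6 = 5 := by omega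
      · exact ⟨-(a / 6), Subtype.ext (by grind)⟩
      · exact ⟨a / 6 + 1, Subtype.ext (by grind)⟩⟩

lemma coe_coprimeToSixEquiv (k : ℤ) : (coprimeToSixEquiv k : ℕ) = (6 * k - 1).natAbs := rfl

lemma etaSeries_eq_X_mul_expand :
    etaSeries = X * expand 24 (by norm_num) (pentagonalSeries (ZMod 2)) := by
  rw [etaSeries, thetaSeries, ← fiberSeries_comp_equiv coprimeToSixEquiv, pentagonalSeries_zmod_two,
    expand_fiberSeries]
  ext n
  rcases n with _ | n
  · rw [coeff_zero_X_mul]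
    refine coeff_fiberSeries_of_notMem_range ?_
    rintro ⟨k, hk⟩
    simp [coe_coprimeToSixEquiv, sq_six_mul_sub_one] at hk
  · rw [coeff_succ_X_mul, coeff_fiberSeries, coeff_fiberSeries]
    simp [coe_coprimeToSixEquiv, sq_six_mul_sub_one]

lemma continuous_expand [TopologicalSpace R] {m : ℕ} (hm : m ≠ 0) :
    Continuous (expand m hm : R⟦X⟧ → R⟦X⟧) := by
  refine continuous_iff_continuousAt.2 fun A => ?_
  rw [ContinuousAt, WithPiTopology.tendsto_iff_coeff_tendsto]
  intro n
  simp only [coeff_expand]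
  split_ifs
  · exact (WithPiTopology.continuous_coeff R _).tendsto A
  · exact tendsto_const_nhds

lemma continuous_rescale [TopologicalSpace R] [ContinuousMul R] (w : R) :
    Continuous (rescale w : R⟦X⟧ → R⟦X⟧) := by
  refine continuous_iff_continuousAt.2 fun A => ?_
  rw [ContinuousAt, WithPiTopology.tendsto_iff_coeff_tendsto]
  intro n
  simp only [coeff_rescale]
  exact ((WithPiTopology.continuous_coeff R n).tendsto A).const_mul _

lemma rescale_expand (w : R) {m : ℕ} (hm : m ≠ 0) (A : R⟦X⟧) :
    rescale w (expand m hm A) = expand m hm (rescale (w ^ m) A) := by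
  ext n
  rw [coeff_rescale]
  by_cases hn : m ∣ n
  · obtain ⟨n, rfl⟩ := hn
    rw [coeff_expand_mul, coeff_expand_mul, coeff_rescale, pow_mul]
  · rw [coeff_expand_of_not_dvd m hm A hn, coeff_expand_of_not_dvd m hm _ hn, mul_zero]

lemma hasProd_one_sub_X_pow_of_dvd [TopologicalSpace R] [IsTopologicalRing R] {m : ℕ}
    (hm : m ≠ 0) :
    HasProd (fun i => if m ∣ i + 1 then (1 - X ^ (i + 1) : R⟦X⟧) else 1)
      (expand m hm (pentagonalSeries R)) := by
  have hle (i : ℕ) : 1 ≤ (i + 1) * m := Nat.one_le_iff_ne_zero.2 (by positivity)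
  have hinj : Function.Injective fun i : ℕ => (i + 1) * m - 1 := fun i j h => by
    simpa [hm] using (tsub_left_inj (hle i) (hle j)).1 h
  rw [← hinj.hasProd_iff]
  · refine ((WithPiTopology.hasProd_one_sub_X_pow R).map (expand m hm)
      (continuous_expand hm)).congr_fun fun i => ?_
    simp only [Function.comp_apply, Nat.sub_add_cancel (hle i), dvd_mul_left, if_true, map_sub,
      map_one, map_pow, expand_X, ← pow_mul, mul_comm m]
  · rintro i hi
    refine if_neg ?_
    rintro ⟨k, hk⟩
    obtain ⟨k, rfl⟩ := Nat.exists_eq_succ_of_ne_zero (show k ≠ 0 by rintro rfl; omega)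
    exact hi ⟨k, Nat.sub_eq_of_eq_add (by rw [hk, mul_comm])⟩

end EulerProduct

section PartitionSeries

open scoped WithPiTopology

variable {R S : Type*} [CommRing R] [CommRing S]

/-- The generating function `∑ p(n) Xⁿ` of the partition function. -/
noncomputable def partitionSeries (R : Type*) [CommRing R] : R⟦X⟧ :=
  fiberSeries R (Sigma.fst : (Σ k : ℕ, k.Partition) → ℕ)

/-- The generating function of the `m`-regular partitions. -/
noncomputable def regularPartitionSeries (R : Type*) [CommRing R] (m : ℕ) : R⟦X⟧ :=
  mk fun n => (numRegularPartitions m n : R)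

lemma coeff_partitionSeries (n : ℕ) :
    coeff n (partitionSeries R) = (Fintype.card n.Partition : R) := by
  rw [partitionSeries, coeff_fiberSeries, Nat.card_congr (Equiv.sigmaSubtype n),
    Nat.card_eq_fintype_card]

lemma coeff_partitionSeries_pow (t n : ℕ) :
    coeff n (partitionSeries R ^ t) = (numMultipartitions t n : R) := by
  rw [partitionSeries, fiberSeries_pow fun n => .of_equiv _ (Equiv.sigmaSubtype n).symm,
    coeff_fiberSeries, numMultipartitions]

lemma map_partitionSeries (φ : R →+* S) : map φ (partitionSeries R) = partitionSeries S := by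
  ext n
  rw [coeff_map, coeff_partitionSeries, coeff_partitionSeries, map_natCast]

lemma card_restricted_not_dvd (m n : ℕ) :
    (Nat.Partition.restricted n (¬ m ∣ ·)).card = numRegularPartitions m n := by
  rw [numRegularPartitions, Nat.card_eq_fintype_card, Fintype.card_subtype,
    Nat.Partition.restricted]

lemma regularPartitionSeries_mul {m : ℕ} (hm : m ≠ 0) :
    regularPartitionSeries R m * pentagonalSeries R = expand m hm (pentagonalSeries R) := by
  let _ : TopologicalSpace R := ⊥
  have : DiscreteTopology R := ⟨rfl⟩
  have h := (Nat.Partition.hasProd_powerSeriesMk_card_restricted R (¬ m ∣ ·)).mul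
    (WithPiTopology.hasProd_one_sub_X_pow R)
  simp only [card_restricted_not_dvd] at h
  refine h.unique ((hasProd_one_sub_X_pow_of_dvd hm).congr_fun fun i => ?_)
  by_cases hi : m ∣ i + 1
  · simp only [hi, not_true_eq_false, if_true, if_false, one_mul]
  · simp only [hi, not_false_eq_true, if_true, if_false, pow_mul]
    exact WithPiTopology.tsum_pow_mul_one_sub_of_constantCoeff_eq_zero (by simp)

lemma partitionSeries_mul : partitionSeries R * pentagonalSeries R = 1 := by
  let _ : TopologicalSpace R := ⊥
  have : DiscreteTopology R := ⟨rfl⟩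
  have h := (Nat.Partition.hasProd_powerSeriesMk_card_restricted R (fun _ => True)).mul
    (WithPiTopology.hasProd_one_sub_X_pow R)
  have hmk : (mk fun n => ((Nat.Partition.restricted n fun _ => True).card : R)) =
      partitionSeries R := by
    ext n
    simp [coeff_partitionSeries, Nat.Partition.restricted]
  rw [hmk] at h
  refine h.unique (hasProd_one.congr_fun fun i => ?_)
  simp only [if_true, pow_mul]
  exact WithPiTopology.tsum_pow_mul_one_sub_of_constantCoeff_eq_zero (by simp)

lemma regularPartitionSeries_eq {m : ℕ} (hm : m ≠ 0) :
    regularPartitionSeries R m = expand m hm (pentagonalSeries R) * partitionSeries R := by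
  rw [← regularPartitionSeries_mul hm, mul_assoc, mul_comm (pentagonalSeries R),
    partitionSeries_mul, mul_one]

end PartitionSeries

section Conjugates

lemma aeval_esymm_eq_sum_prod_erase {R σ : Type*} [CommRing R] [Fintype σ] [DecidableEq σ]
    {k : ℕ} (hσ : Fintype.card σ = k + 1) (y : σ → R) :
    MvPolynomial.aeval y (MvPolynomial.esymm σ R k) = ∑ i, ∏ l ∈ Finset.univ.erase i, y l := by
  rw [MvPolynomial.esymm, map_sum]
  simp only [map_prod, MvPolynomial.aeval_X]
  symm
  refine Finset.sum_bij (fun i _ => Finset.univ.erase i) (fun i _ => ?_)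
    (fun i _ j _ h => (Finset.erase_inj _ (Finset.mem_univ i)).1 h) (fun s hs => ?_)
    (fun _ _ => rfl)
  · simp [Finset.mem_powersetCard, hσ]
  · have hcard : sᶜ.card = 1 := by
      rw [Finset.card_compl, (Finset.mem_powersetCard.1 hs).2, hσ, Nat.add_sub_cancel_left]
    obtain ⟨i, hi⟩ := Finset.card_eq_one.1 hcard
    exact ⟨i, Finset.mem_univ i, by rw [← Finset.compl_singleton, ← hi, compl_compl]⟩

lemma mul_sum_prod_erase_eq_sum_pow {R σ : Type*} [CommRing R] [Fintype σ] [DecidableEq σ]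
    {k : ℕ} (hk : 0 < k) (hσ : Fintype.card σ = k + 1) {y : σ → R}
    (hy : ∀ j, 0 < j → j < k → ∑ i, y i ^ j = 0) :
    k * ∑ i, ∏ l ∈ Finset.univ.erase i, y l = (-1) ^ (k + 1) * ∑ i, y i ^ k := by
  have hpsum (j : ℕ) : MvPolynomial.aeval y (MvPolynomial.psum σ R j) = ∑ i, y i ^ j := by
    simp only [MvPolynomial.psum, map_sum, map_pow, MvPolynomial.aeval_X]
  have newton := congrArg (MvPolynomial.aeval y) (MvPolynomial.mul_esymm_eq_sum σ R k)
  rw [map_mul, map_natCast, aeval_esymm_eq_sum_prod_erase hσ, map_mul, map_sum,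
    Finset.sum_eq_single (0, k)] at newton
  · simpa [hpsum] using newton
  · rintro ⟨a, b⟩ hab hne
    simp only [Finset.mem_filter, mem_antidiagonal] at hab
    have ha : a ≠ 0 := by
      rintro rfl
      exact hne (by rw [← hab.1, zero_add])
    rw [map_mul, hpsum, hy b (by omega) (by omega), mul_zero]
  · simp [hk]

variable {K : Type*} [Field K] {p : ℕ} {z : K}

lemma sum_pow_eq_ite (hz : IsPrimitiveRoot z p) (n : ℕ) :
    ∑ j : Fin p, (z ^ (j : ℕ)) ^ n = if p ∣ n then (p : K) else 0 := by
  simp only [← pow_mul, mul_comm _ n]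
  simp only [pow_mul]
  rw [← Finset.sum_range fun j => (z ^ n) ^ j]
  split_ifs with hn
  · simp [(hz.pow_eq_one_iff_dvd n).2 hn]
  · have hne : z ^ n ≠ 1 := mt (hz.pow_eq_one_iff_dvd n).1 hn
    rw [geom_sum_eq hne, pow_right_comm, hz.pow_eq_one, one_pow, sub_self, zero_div]

variable [NeZero p]

lemma sum_rescale (hz : IsPrimitiveRoot z p) (A : K⟦X⟧) :
    ∑ j : Fin p, rescale (z ^ (j : ℕ)) A = p * expand p (NeZero.ne p) (decimate p A) := by
  ext n
  simp only [map_sum, coeff_rescale, ← Finset.sum_mul, sum_pow_eq_ite hz]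
  rw [← map_natCast (C : K →+* K⟦X⟧), coeff_C_mul]
  by_cases hn : p ∣ n
  · obtain ⟨n, rfl⟩ := hn
    rw [if_pos (dvd_mul_right p n), coeff_expand_mul, coeff_decimate]
  · rw [if_neg hn, coeff_expand_of_not_dvd p _ _ hn, mul_zero, zero_mul]

/-- The `p + 1` conjugates `A(X^(p²))` and `A(zʲX)`, `0 ≤ j < p`, of a power series `A`, where `z`
is a `p`-th root of unity; their power sums are images of powers of `A` under `hecke p`. -/
noncomputable def conjugate (p : ℕ) [NeZero p] (z : K) : Option (Fin p) → K⟦X⟧ →+* K⟦X⟧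
  | none => (expand (p ^ 2) (NeZero.ne _) : K⟦X⟧ →ₐ[K] K⟦X⟧)
  | some j => rescale (z ^ (j : ℕ))

lemma conjugate_none (A : K⟦X⟧) : conjugate p z none A = expand (p ^ 2) (NeZero.ne _) A := rfl

lemma conjugate_some (j : Fin p) (A : K⟦X⟧) :
    conjugate p z (some j) A = rescale (z ^ (j : ℕ)) A := rfl

lemma expand_sq (A : K⟦X⟧) : expand (p ^ 2) (NeZero.ne _) A =
    expand p (NeZero.ne p) (expand p (NeZero.ne p) A) := by
  rw [← expand_mul]
  simp only [sq]

lemma sum_conjugate (hz : IsPrimitiveRoot z p) (hp : (p : K) = 1) (A : K⟦X⟧) :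
    ∑ i, conjugate p z i A = expand p (NeZero.ne p) (hecke p A) := by
  have hp' : (p : K⟦X⟧) = 1 := by rw [← map_natCast (C : K →+* K⟦X⟧), hp, map_one]
  simp only [Fintype.sum_option, conjugate_none, conjugate_some]
  rw [sum_rescale hz, hp', one_mul, expand_sq, ← map_add, add_comm, hecke]

lemma sum_prod_erase_conjugate (hz : IsPrimitiveRoot z p) (hp : (p : K) = 1) (hodd : Odd p)
    {G : K⟦X⟧} (hG : ∀ k, 0 < k → k < p → hecke p (G ^ k) = 0) (hGp : hecke p (G ^ p) = G) :
    ∑ i, ∏ l ∈ Finset.univ.erase i, conjugate p z l G = expand p (NeZero.ne p) G := by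
  have hp' : (p : K⟦X⟧) = 1 := by rw [← map_natCast (C : K →+* K⟦X⟧), hp, map_one]
  have newton := mul_sum_prod_erase_eq_sum_pow (y := fun i => conjugate p z i G) hodd.pos
    (by simp) fun k hk hkp => by
      simp only [← map_pow]
      rw [sum_conjugate hz hp, hG k hk hkp, map_zero]
  simp only [← map_pow] at newton
  rwa [sum_conjugate hz hp, hGp, hp', one_mul, hodd.add_one.neg_one_pow, one_mul] at newton

lemma prod_rescale_one_sub_X_pow (hp : p.Prime) (hz : IsPrimitiveRoot z p) (m : ℕ) :
    ∏ j : Fin p, rescale (z ^ (j : ℕ)) (1 - X ^ m : K⟦X⟧) =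
      if p ∣ m then (1 - X ^ m) ^ p else 1 - X ^ (p * m) := by
  have hterm (j : ℕ) : rescale (z ^ j) (1 - X ^ m : K⟦X⟧) = 1 - C (z ^ m) ^ j * X ^ m := by
    rw [map_sub, map_one, map_pow, rescale_X, mul_pow, ← map_pow, ← map_pow, pow_right_comm]
  simp only [hterm]
  split_ifs with h
  · simp [(hz.pow_eq_one_iff_dvd m).2 h]
  · have hzm : IsPrimitiveRoot (C (z ^ m) : K⟦X⟧) p :=
      (hz.pow_of_coprime m ((hp.coprime_iff_not_dvd.2 h).symm)).map_of_injective C_injective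
    have hfactor := hzm.pow_sub_pow_eq_prod_sub_mul 1 (X ^ m) hp.pos
    rw [one_pow, ← pow_mul, mul_comm m] at hfactor
    rw [hfactor]
    refine Finset.prod_bij (fun j _ => C (z ^ m) ^ (j : ℕ)) (fun j _ => ?_)
      (fun i _ j _ hij => Fin.ext (hzm.pow_inj i.2 j.2 hij)) (fun w hw => ?_) (fun _ _ => rfl)
    · rw [Polynomial.mem_nthRootsFinset hp.pos, pow_right_comm, hzm.pow_eq_one, one_pow]
    · rw [Polynomial.mem_nthRootsFinset hp.pos] at hw
      obtain ⟨j, hj, rfl⟩ := hzm.eq_pow_of_pow_eq_one hw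
      exact ⟨⟨j, hj⟩, Finset.mem_univ _, rfl⟩

open scoped WithPiTopology in
lemma prod_conjugate_pentagonalSeries (hp : p.Prime) (hz : IsPrimitiveRoot z p) :
    ∏ i, conjugate p z i (pentagonalSeries K) =
      expand p (NeZero.ne p) (pentagonalSeries K) ^ (p + 1) := by
  let _ : TopologicalSpace K := ⊥
  have _ : DiscreteTopology K := ⟨rfl⟩
  have hE := WithPiTopology.hasProd_one_sub_X_pow K
  have hEp := hE.map (expand p (NeZero.ne p)) (continuous_expand _)
  have hdvd := hasProd_one_sub_X_pow_of_dvd (R := K) (NeZero.ne p)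
  have hrescale := hasProd_prod (s := Finset.univ) fun (j : Fin p) _ =>
    hE.map (rescale (z ^ (j : ℕ))) (continuous_rescale _)
  have hleft := (hdvd.map (expand p (NeZero.ne p)) (continuous_expand _)).mul hrescale
  rw [← expand_sq] at hleft
  rw [Fintype.prod_option, pow_succ']
  refine hleft.unique ((hEp.mul (hdvd.pow p)).congr_fun fun i => ?_)
  simp only [Function.comp_apply]
  rw [prod_rescale_one_sub_X_pow hp hz]
  by_cases h : p ∣ i + 1
  · simp only [h, if_true]
  · simp only [h, if_false, map_sub, map_one, map_pow, expand_X, ← pow_mul, one_pow, mul_one,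
      one_mul]

lemma conjugate_expand {m : ℕ} (hm : m ≠ 0) (A : K⟦X⟧) (i : Option (Fin p)) :
    conjugate p z i (expand m hm A) = expand m hm (conjugate p (z ^ m) i A) := by
  cases i with
  | none => exact expand_comm (NeZero.ne (p ^ 2)) hm A
  | some j => rw [conjugate_some, conjugate_some, rescale_expand, pow_right_comm]

lemma prod_conjugate_X (hz : IsPrimitiveRoot z p) (hodd : Odd p) :
    ∏ i, conjugate p z i X = (X ^ p) ^ (p + 1) := by
  obtain ⟨r, hr⟩ := hodd
  have hsum : ∑ j : Fin p, (j : ℕ) = p * r := by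
    have := Finset.sum_range_id_mul_two p
    rw [Fin.sum_univ_eq_sum_range fun j => j]
    rw [show p - 1 = r * 2 by omega, ← mul_assoc] at this
    exact Nat.eq_of_mul_eq_mul_right two_pos this
  simp only [Fintype.prod_option, conjugate_none, conjugate_some, expand_X, rescale_X]
  rw [Finset.prod_mul_distrib, ← map_prod, Finset.prod_pow_eq_pow_sum, hsum, pow_mul,
    hz.pow_eq_one, one_pow, map_one, one_mul, Finset.prod_const, Finset.card_univ,
    Fintype.card_fin, ← pow_add, ← pow_mul, sq, mul_add_one]

lemma prod_conjugate_X_mul_expand (hp : p.Prime) (hz : IsPrimitiveRoot z p) (hodd : Odd p) {m : ℕ}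
    (hm : m ≠ 0) (hmp : m.Coprime p) :
    ∏ i, conjugate p z i (X * expand m hm (pentagonalSeries K)) =
      expand p (NeZero.ne p) (X * expand m hm (pentagonalSeries K)) ^ (p + 1) := by
  simp only [map_mul, Finset.prod_mul_distrib, conjugate_expand]
  rw [prod_conjugate_X hz hodd, ← map_prod,
    prod_conjugate_pentagonalSeries hp (hz.pow_of_coprime m hmp), expand_X, map_pow,
    expand_comm, mul_pow]

-- `∑ᵢ ∏_{l ≠ i} Gₗ = (∏ᵢ Gᵢ) · ∑ᵢ Gᵢ⁻¹` over the conjugates `Gᵢ` of `G`; multiplied by `X^(p²)`,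
-- the inverses `Gᵢ⁻¹` become the conjugates of `X^(p²) / G = X^(p² - 1) W`.
lemma pow_eq_decimate_add_expand (hz : IsPrimitiveRoot z p) (hp : (p : K) = 1) (hodd : Odd p)
    {G W : K⟦X⟧} (hGW : G * W = X) (hG : ∀ k, 0 < k → k < p → hecke p (G ^ k) = 0)
    (hGp : hecke p (G ^ p) = G)
    (hprod : ∏ i, conjugate p z i G = expand p (NeZero.ne p) G ^ (p + 1)) :
    W ^ p = decimate p (X ^ (p ^ 2 - 1) * W) + expand p (NeZero.ne p) W := by
  have hp' : (p : K⟦X⟧) = 1 := by rw [← map_natCast (C : K →+* K⟦X⟧), hp, map_one]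
  set V := decimate p (X ^ (p ^ 2 - 1) * W) + expand p (NeZero.ne p) W
  set H := expand p (NeZero.ne p) G
  have hHW : H * expand p (NeZero.ne p) W = X ^ p := by rw [← map_mul, hGW, expand_X]
  have hH : H ≠ 0 := left_ne_zero_of_mul (hHW ▸ pow_ne_zero p X_ne_zero)
  let inv : Option (Fin p) → K⟦X⟧
    | none => expand (p ^ 2) (NeZero.ne _) W
    | some j => rescale (z ^ (j : ℕ)) (X ^ (p ^ 2 - 1) * W)
  have hinv (i) : X ^ p ^ 2 = conjugate p z i G * inv i := by
    cases i with
    | none => rw [conjugate_none, ← map_mul, hGW, expand_X]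
    | some j =>
      rw [conjugate_some, ← map_mul, mul_left_comm, hGW, pow_sub_one_mul (NeZero.ne _), map_pow,
        rescale_X, mul_pow, ← map_pow, sq, pow_mul (z ^ _), pow_right_comm z, hz.pow_eq_one,
        one_pow, one_pow, map_one, one_mul]
  have hsum : ∑ i, inv i = expand p (NeZero.ne p) V := by
    rw [Fintype.sum_option]
    simp only [inv, V]
    rw [sum_rescale hz, hp', one_mul, expand_sq, ← map_add, add_comm]
  refine (expand_injective (NeZero.ne p) (mul_left_cancel₀ (pow_ne_zero (p + 1) hH) ?_)).symm
  calc H ^ (p + 1) * expand p (NeZero.ne p) V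
      = ∑ i, (∏ l, conjugate p z l G) * inv i := by rw [← hsum, ← hprod, Finset.mul_sum]
    _ = ∑ i, X ^ p ^ 2 * ∏ l ∈ Finset.univ.erase i, conjugate p z l G := by
      refine Finset.sum_congr rfl fun i _ => ?_
      rw [hinv i, ← Finset.mul_prod_erase Finset.univ _ (Finset.mem_univ i), mul_right_comm]
    _ = (X ^ p) ^ p * H := by
      rw [← Finset.mul_sum, sum_prod_erase_conjugate hz hp hodd hG hGp, ← pow_mul, sq]
    _ = H ^ (p + 1) * expand p (NeZero.ne p) (W ^ p) := by
      rw [← hHW, mul_pow, map_pow, pow_succ, mul_right_comm]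

end Conjugates

section Dissection

variable {p : ℕ}

lemma coeff_expand_pentagonalSeries_eq_zero {R : Type*} [CommRing R] {m : ℕ} (hm : m ≠ 0) {n : ℕ}
    (hn : ∀ y : ZMod p, 24 * (n : ZMod p) + m ≠ m * y ^ 2) :
    coeff n (expand m hm (pentagonalSeries R)) = 0 := by
  by_cases hmn : m ∣ n
  · obtain ⟨n, rfl⟩ := hmn
    rw [coeff_expand_mul, coeff_pentagonalSeries_eq_zero]
    rintro ⟨k, rfl⟩
    refine hn ((6 * k - 1).natAbs : ZMod p) ?_
    rw [← Nat.cast_pow, sq_six_mul_sub_one]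
    push_cast
    ring
  · exact coeff_expand_of_not_dvd m hm _ hmn

variable [NeZero p]

lemma partitionSeries_pow_eq_decimate_add_expand (hp : p.Prime) {s : ℕ} (hs : p ^ 2 = 24 * s + 1)
    (hlow : ∀ k, 0 < k → k < p → hecke p (etaSeries ^ k) = 0)
    (hmid : hecke p (etaSeries ^ p) = etaSeries) :
    partitionSeries (ZMod 2) ^ p =
      decimate p (X ^ s * partitionSeries (ZMod 2)) +
        expand p (NeZero.ne p) (partitionSeries (ZMod 2)) := by
  have h24 : (24 : ℕ) ≠ 0 := by norm_num
  have hcop : Nat.Coprime 24 p := by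
    rw [← Nat.coprime_pow_right_iff two_pos, hs]
    simp
  have hodd : Odd p := (Nat.Coprime.of_dvd_left (by norm_num : 2 ∣ 24) hcop).odd_of_left
  let K := AlgebraicClosure (ZMod 2)
  let φ : ZMod 2 →+* K := algebraMap (ZMod 2) K
  have hpK : (p : K) = 1 := by
    rw [← map_natCast φ, ZMod.natCast_eq_one_iff_odd.2 hodd, map_one]
  have : NeZero (p : K) := ⟨hpK ▸ one_ne_zero⟩
  obtain ⟨z, hz⟩ := HasEnoughRootsOfUnity.exists_primitiveRoot K p
  have hG : map φ etaSeries = X * expand 24 h24 (pentagonalSeries K) := by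
    rw [etaSeries_eq_X_mul_expand, map_mul, map_X, map_expand, map_pentagonalSeries]
  have hinv : map φ etaSeries * expand 24 h24 (partitionSeries K) = X := by
    rw [hG, mul_assoc, ← map_mul, mul_comm (pentagonalSeries K), partitionSeries_mul, map_one,
      mul_one]
  have key := pow_eq_decimate_add_expand hz hpK hodd hinv
    (fun k hk hkp => by rw [← map_pow, ← map_hecke, hlow k hk hkp, map_zero])
    (by rw [← map_pow, ← map_hecke, hmid])
    (by rw [hG]; exact prod_conjugate_X_mul_expand hp hz hodd h24 hcop)
  have hX : X ^ (p ^ 2 - 1) * expand 24 h24 (partitionSeries K) =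
      expand 24 h24 (X ^ s * partitionSeries K) := by
    rw [map_mul, map_pow, expand_X, ← pow_mul, hs, Nat.add_sub_cancel]
  rw [hX, decimate_expand_of_coprime h24 hcop, expand_comm, ← map_pow, ← map_add] at key
  refine PowerSeries.map_injective φ φ.injective ?_
  simpa only [map_pow, map_add, map_mul, map_decimate, map_expand, map_X, map_partitionSeries]
    using expand_injective h24 key

lemma decimate_X_pow_mul_regularPartitionSeries {a t s : ℕ} (hat : 2 ^ a + t = p)
    (hdissect : partitionSeries (ZMod 2) ^ p =
      decimate p (X ^ s * partitionSeries (ZMod 2)) +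
        expand p (NeZero.ne p) (partitionSeries (ZMod 2))) :
    decimate p (X ^ s * regularPartitionSeries (ZMod 2) (p * 2 ^ a)) =
      partitionSeries (ZMod 2) ^ t - expand (2 ^ a) (NeZero.ne _) (pentagonalSeries (ZMod 2)) *
        expand p (NeZero.ne p) (partitionSeries (ZMod 2)) := by
  have hone : expand (2 ^ a) (NeZero.ne _) (pentagonalSeries (ZMod 2)) *
      partitionSeries (ZMod 2) ^ 2 ^ a = 1 := by
    rw [expand_two_pow, ← mul_pow, mul_comm, partitionSeries_mul, one_pow]
  have hpow : partitionSeries (ZMod 2) ^ p =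
      partitionSeries (ZMod 2) ^ 2 ^ a * partitionSeries (ZMod 2) ^ t := by rw [← pow_add, hat]
  rw [regularPartitionSeries_eq (NeZero.ne _), mul_left_comm,
    expand_mul p (NeZero.ne p) (2 ^ a) (NeZero.ne _), decimate_expand_mul,
    eq_sub_of_add_eq hdissect.symm, mul_sub, hpow, ← mul_assoc, hone, one_mul]

lemma coeff_mul_expand_eq_zero {R : Type*} [CommRing R] {A : R⟦X⟧} {n : ℕ}
    (hA : ∀ i, i ≡ n [MOD p] → coeff i A = 0) (B : R⟦X⟧) :
    coeff n (A * expand p (NeZero.ne p) B) = 0 := by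
  rw [coeff_mul]
  refine Finset.sum_eq_zero ?_
  rintro ⟨i, j⟩ hij
  rw [mem_antidiagonal] at hij
  by_cases hj : p ∣ j
  · obtain ⟨j, rfl⟩ := hj
    rw [hA i (by simp [← hij, Nat.ModEq]), zero_mul]
  · rw [coeff_expand_of_not_dvd p _ _ hj, mul_zero]

end Dissection

section Congruences

lemma numRegularPartitions_modEq_numMultipartitions {a t : ℕ} (hat : 2 ^ a + t = 17) {B : ℕ}
    (hB : 0 < B) (hres : ∀ y : ZMod 17, 24 * (B : ZMod 17) + 2 ^ a ≠ 2 ^ a * y ^ 2) (n : ℕ) :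
    numRegularPartitions (17 * 2 ^ a) (289 * n + 17 * B - 12) ≡
      numMultipartitions t (17 * n + B) [MOD 2] := by
  have hdissect := decimate_X_pow_mul_regularPartitionSeries hat
    (partitionSeries_pow_eq_decimate_add_expand (s := 12) (by norm_num) (by norm_num)
      (fun _ => hecke_etaSeries_pow) hecke_etaSeries_pow_seventeen)
  have hvanish : coeff (17 * n + B) (expand (2 ^ a) (NeZero.ne _) (pentagonalSeries (ZMod 2)) *
      expand 17 (NeZero.ne 17) (partitionSeries (ZMod 2))) = 0 := by
    refine coeff_mul_expand_eq_zero (fun i hi => ?_) _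
    refine coeff_expand_pentagonalSeries_eq_zero (p := 17) _ ?_
    have hiB : (i : ZMod 17) = B := by
      rw [(ZMod.natCast_eq_natCast_iff _ _ _).2 hi]
      push_cast
      rw [show (17 : ZMod 17) = 0 from rfl, zero_mul, zero_add]
    push_cast
    rwa [hiB]
  have hcoeff := congrArg (coeff (17 * n + B)) hdissect
  rw [coeff_decimate, coeff_X_pow_mul', if_pos (by omega), map_sub, hvanish, sub_zero,
    coeff_partitionSeries_pow, regularPartitionSeries, coeff_mk, mul_add, ← mul_assoc] at hcoeff
  exact (ZMod.natCast_eq_natCast_iff _ _ _).1 hcoeff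

end Congruences

end PartitionParity

theorem stmt_4 (n : ℕ) :
    (∀ B ∈ ({3, 5, 6, 8, 9, 11, 15, 16} : Finset ℕ),
      numRegularPartitions 34 (289 * n + 17 * B - 12) ≡
        numMultipartitions 15 (17 * n + B) [MOD 2]) ∧
    (∀ B ∈ ({1, 5, 6, 10, 12, 13, 15, 16} : Finset ℕ),
      numRegularPartitions 68 (289 * n + 17 * B - 12) ≡
        numMultipartitions 13 (17 * n + B) [MOD 2]) ∧
    (∀ B ∈ ({2, 3, 7, 9, 10, 12, 13, 15} : Finset ℕ),
      numRegularPartitions 136 (289 * n + 17 * B - 12) ≡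
        numMultipartitions 9 (17 * n + B) [MOD 2]) ∧
    (∀ B ∈ ({1, 3, 4, 6, 7, 9, 13, 14} : Finset ℕ),
      numRegularPartitions 272 (289 * n + 17 * B - 12) ≡
        numMultipartitions 1 (17 * n + B) [MOD 2]) := by
  refine ⟨fun B hB => ?_, fun B hB => ?_, fun B hB => ?_, fun B hB => ?_⟩
  · refine PartitionParity.numRegularPartitions_modEq_numMultipartitions (a := 1) rfl ?_ ?_ n <;>
      revert B <;> decide
  · refine PartitionParity.numRegularPartitions_modEq_numMultipartitions (a := 2) rfl ?_ ?_ n <;>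
      revert B <;> decide
  · refine PartitionParity.numRegularPartitions_modEq_numMultipartitions (a := 3) rfl ?_ ?_ n <;>
      revert B <;> decide
  · refine PartitionParity.numRegularPartitions_modEq_numMultipartitions (a := 4) rfl ?_ ?_ n <;>
      revert B <;> decide
end

section
/- For every natural number n: for every B in {1, 3, 8, 9, 12, 15, 16, 17, 18}, b_38(361n + 19B − 15) ≡ p_17(19n + B) (mod 2); for every B in {2, 5, 6, 11, 13, 15, 16, 17, 18}, b_76(361n + 19B − 15) ≡ p_15(19n + B) (mod 2); for every B in {3, 4, 7, 10, 11, 12, 13, 15, 17}, b_152(361n + 19B − 15) ≡ p_11(19n + B) (mod 2); and for every B in {1, 3, 5, 6, 7, 8, 11, 14, 15}, b_304(361n + 19B − 15) ≡ p_3(19n + B) (mod 2). -/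
/-!
Write `E` for Euler's product, put `δ = (p² - 1) / 24`, and let `U` be Atkin's operator `U_p`. The
Hecke operator at `p` maps `η⁻⁸` to a function of weight `-4` whose cubic character is inverse to
that of `η ^ (8p)`, so its product with `η ^ (8p)` is a modular form of level one and weight
`4 (p - 1)`. After multiplication by `p ^ 5` the `q`-expansion of the product is integral, and
modulo two it is the eighth power of `E ^ p (U (q ^ δ / E) + 1 / E (q ^ p))`, hence congruent to `1`
modulo `q ^ 8`. For `p ≤ 23` this exceeds the Sturm bound, so comparison with `E₄ ^ (p - 1) ≡ 1`
gives `U (q ^ δ / E) ≡ E ^ (-p) + 1 / E (q ^ p)` modulo two. If `2 ^ s + t = p`, multiplying by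
`E ^ (2 ^ s)` turns this into
`U (q ^ δ ∑ b_(2 ^ s p) (n) q ^ n) ≡ ∑ p_t (n) q ^ n + E (q ^ (2 ^ s)) / E (q ^ p)`,
and by the pentagonal number theorem the last term has coefficient zero at `q ^ N` unless
`2 N ≡ 2 ^ s x (3 x - 1)` modulo `p` for some `x`. The four families are the cases
`19 = 2 + 17 = 4 + 15 = 8 + 11 = 16 + 3`.
-/

open PowerSeries UpperHalfPlane ModularForm Function.Periodic
open scoped PowerSeries.WithPiTopology MatrixGroups Manifold

/-! ### Power series on the unit disc -/

section UnitDisc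

/-- `EvalsTo F f` says that the complex power series `F` converges to the function `f` on the open
unit disc. -/
def EvalsTo (F : ℂ⟦X⟧) (f : ℂ → ℂ) : Prop :=
  ∀ q : ℂ, ‖q‖ < 1 → HasSum (fun n ↦ coeff n F * q ^ n) (f q)

variable {F G : ℂ⟦X⟧} {f g : ℂ → ℂ}

theorem tendstoLocallyUniformlyOn_iteratedDeriv {ι E : Type*} [NormedAddCommGroup E]
    [NormedSpace ℂ E] [CompleteSpace E] {l : Filter ι} {U : Set ℂ} {F : ι → ℂ → E}
    {f : ℂ → E} (h : TendstoLocallyUniformlyOn F f l U)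
    (hF : ∀ᶠ i in l, DifferentiableOn ℂ (F i) U) (hU : IsOpen U) (n : ℕ) :
    TendstoLocallyUniformlyOn (fun i ↦ iteratedDeriv n (F i)) (iteratedDeriv n f) l U := by
  induction n generalizing F f with
  | zero => simpa only [iteratedDeriv_zero] using h
  | succ n ih =>
    simp only [iteratedDeriv_succ']
    exact ih (h.deriv hF hU) (hF.mono fun _ hi ↦ hi.deriv hU)

namespace EvalsTo

theorem congr (hF : EvalsTo F f) (hfg : ∀ q, ‖q‖ < 1 → f q = g q) : EvalsTo F g :=
  fun q hq ↦ hfg q hq ▸ hF q hq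

theorem monomial (n : ℕ) (c : ℂ) : EvalsTo (PowerSeries.monomial n c) fun q ↦ c * q ^ n := by
  intro q _
  convert hasSum_single n fun m (hm : m ≠ n) ↦ ?_ using 1
  · rw [coeff_monomial_same]
  · rw [coeff_monomial, if_neg hm, zero_mul]

theorem X_pow (n : ℕ) : EvalsTo (X ^ n) fun q ↦ q ^ n := by
  simpa only [X_pow_eq, one_mul] using monomial n 1

theorem one : EvalsTo 1 fun _ ↦ 1 := by
  simpa only [pow_zero] using X_pow 0

theorem add (hF : EvalsTo F f) (hG : EvalsTo G g) : EvalsTo (F + G) fun q ↦ f q + g q := by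
  intro q hq
  simpa only [map_add, add_mul] using (hF q hq).add (hG q hq)

theorem sub (hF : EvalsTo F f) (hG : EvalsTo G g) : EvalsTo (F - G) fun q ↦ f q - g q := by
  intro q hq
  simpa only [map_sub, sub_mul] using (hF q hq).sub (hG q hq)

theorem mul (hF : EvalsTo F f) (hG : EvalsTo G g) : EvalsTo (F * G) fun q ↦ f q * g q := by
  intro q hq
  have hF' := (hF q hq).summable.norm
  have hG' := (hG q hq).summable.norm
  have hsum := (summable_norm_sum_mul_antidiagonal_of_summable_norm hF' hG').of_norm.hasSum
  rw [← tsum_mul_tsum_eq_tsum_sum_antidiagonal_of_summable_norm hF' hG', (hF q hq).tsum_eq,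
    (hG q hq).tsum_eq] at hsum
  refine hsum.congr_fun fun n ↦ ?_
  rw [coeff_mul, Finset.sum_mul]
  refine Finset.sum_congr rfl fun ij hij ↦ ?_
  rw [← Finset.HasAntidiagonal.mem_antidiagonal.mp hij, pow_add]
  ring

theorem C_mul (c : ℂ) (hF : EvalsTo F f) : EvalsTo (C c * F) fun q ↦ c * f q := by
  simpa only [monomial_zero_eq_C_apply, pow_zero, mul_one] using (monomial 0 c).mul hF

theorem prod {ι : Type*} (s : Finset ι) {F : ι → ℂ⟦X⟧} {f : ι → ℂ → ℂ}
    (h : ∀ i ∈ s, EvalsTo (F i) (f i)) : EvalsTo (∏ i ∈ s, F i) fun q ↦ ∏ i ∈ s, f i q := by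
  classical
  induction s using Finset.induction_on with
  | empty => simpa only [Finset.prod_empty] using one
  | insert i s hi ih =>
    simpa only [Finset.prod_insert hi] using
      (h i (Finset.mem_insert_self i s)).mul (ih fun j hj ↦ h j (Finset.mem_insert_of_mem hj))

theorem pow (hF : EvalsTo F f) (k : ℕ) : EvalsTo (F ^ k) fun q ↦ f q ^ k := by
  simpa only [Finset.prod_const, Finset.card_range] using prod (Finset.range k) fun _ _ ↦ hF

theorem expand (hF : EvalsTo F f) {k : ℕ} (hk : k ≠ 0) :
    EvalsTo (F.expand k hk) fun q ↦ f (q ^ k) := by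
  intro q hq
  have h := hF (q ^ k) (by simpa only [norm_pow] using pow_lt_one₀ (norm_nonneg q) hq hk)
  rw [← (mul_right_injective₀ hk).hasSum_iff]
  · simpa only [Function.comp_def, coeff_expand_mul, pow_mul] using h
  · intro n hn
    rw [coeff_expand_of_not_dvd, zero_mul]
    rintro ⟨m, rfl⟩
    exact hn ⟨m, rfl⟩

theorem hasFPowerSeriesOnBall (hF : EvalsTo F f) :
    HasFPowerSeriesOnBall f (.ofScalars ℂ fun n ↦ coeff n F) 0 1 where
  r_le := by
    refine ENNReal.le_of_forall_nnreal_lt fun r hr ↦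
      FormalMultilinearSeries.le_radius_of_summable _ ?_
    simpa using (hF (r : ℝ) (by simpa using hr)).summable.norm
  r_pos := one_pos
  hasSum {q} hq := by
    simpa [FormalMultilinearSeries.ofScalars_apply_eq, mul_comm] using
      hF q (by simpa [← ENNReal.ofReal_one, Metric.eball_ofReal] using hq)

theorem differentiableOn (hF : EvalsTo F f) : DifferentiableOn ℂ f (Metric.ball 0 1) := by
  simpa [← ENNReal.ofReal_one, Metric.eball_ofReal] using hF.hasFPowerSeriesOnBall.differentiableOn

theorem coeff_eq (hF : EvalsTo F f) (n : ℕ) : coeff n F = iteratedDeriv n f 0 / n.factorial := by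
  have hf := hF.hasFPowerSeriesOnBall.hasFPowerSeriesAt
  simpa using congrArg (FormalMultilinearSeries.coeff · n)
    (hf.eq_formalMultilinearSeries hf.analyticAt.hasFPowerSeriesAt)

theorem unique (hF : EvalsTo F f) (hG : EvalsTo G f) : F = G := by
  ext n
  rw [hF.coeff_eq, hG.coeff_eq]

theorem exists_of_differentiableOn (hf : DifferentiableOn ℂ f (Metric.ball 0 1)) :
    ∃ F, EvalsTo F f := by
  refine ⟨PowerSeries.mk fun n ↦ (n.factorial : ℂ)⁻¹ * iteratedDeriv n f 0, fun q hq ↦ ?_⟩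
  refine (Complex.hasSum_taylorSeries_on_ball hf (z := q) (by simpa using hq)).congr_fun
    fun n ↦ ?_
  simp [mul_comm, mul_left_comm]

theorem of_tendstoLocallyUniformlyOn {ι : Type*} {l : Filter ι} [l.NeBot] {F : ι → ℂ⟦X⟧}
    {f : ι → ℂ → ℂ} (hF : ∀ i, EvalsTo (F i) (f i))
    (hfg : TendstoLocallyUniformlyOn f g l (Metric.ball 0 1))
    (hFG : ∀ n, ∀ᶠ i in l, coeff n (F i) = coeff n G) : EvalsTo G g := by
  have hf : ∀ᶠ i in l, DifferentiableOn ℂ (f i) (Metric.ball 0 1) :=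
    .of_forall fun i ↦ (hF i).differentiableOn
  obtain ⟨G', hG'⟩ := exists_of_differentiableOn (hfg.differentiableOn hf Metric.isOpen_ball)
  suffices hGG' : G = G' by rwa [hGG']
  ext n
  have hn := ((tendstoLocallyUniformlyOn_iteratedDeriv hfg hf Metric.isOpen_ball n).tendsto_at
    (Metric.mem_ball_self one_pos)).div_const (n.factorial : ℂ)
  simp only [← hG'.coeff_eq, ← (hF _).coeff_eq] at hn
  exact tendsto_nhds_unique (tendsto_nhds_of_eventually_eq (hFG n)) hn

theorem inv (hF : EvalsTo F f) (hf : ∀ q, ‖q‖ < 1 → f q ≠ 0) (hFG : F * G = 1) :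
    EvalsTo G fun q ↦ (f q)⁻¹ := by
  obtain ⟨G', hG'⟩ := exists_of_differentiableOn
    (hF.differentiableOn.inv fun q hq ↦ hf q (by simpa using hq))
  have hFG' : F * G' = 1 :=
    ((hF.mul hG').congr fun q hq ↦ mul_inv_cancel₀ (hf q hq)).unique one
  have hGF : G * F = 1 := by rwa [mul_comm]
  rwa [left_inv_eq_right_inv hGF hFG']

end EvalsTo

end UnitDisc

/-! ### Euler's product and partitions -/

section EulerProduct

/-- Euler's product `∏ (1 - qⁿ)` over `n ≥ 1`, as a function on the unit disc. -/
noncomputable def eulerProduct (q : ℂ) : ℂ := ∏' n : ℕ, (1 - q ^ (n + 1))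

theorem evalsTo_pentagonalSeries : EvalsTo (pentagonalSeries ℂ) eulerProduct := by
  have hlim := ModularForm.multipliableLocallyUniformlyOn_one_sub_pow.hasProdLocallyUniformlyOn
  exact EvalsTo.of_tendstoLocallyUniformlyOn
    (fun s ↦ EvalsTo.prod s fun n _ ↦ EvalsTo.one.sub (EvalsTo.X_pow (n + 1))) hlim
    (coeff_prod_one_sub_X_pow_eventually_eq ℂ)

theorem eulerProduct_ne_zero {q : ℂ} (hq : ‖q‖ < 1) : eulerProduct q ≠ 0 := by
  simp only [eulerProduct, sub_eq_add_neg]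
  refine tprod_one_add_ne_zero_of_summable (fun n h ↦ ?_) ?_
  · have hn := pow_lt_one₀ (norm_nonneg q) hq n.succ_ne_zero
    have hqn : q ^ n.succ = 1 := (eq_of_sub_eq_zero ((sub_eq_add_neg _ _).trans h)).symm
    rw [← norm_pow, hqn, norm_one] at hn
    exact hn.false
  · simpa only [norm_neg, norm_pow] using
      (summable_nat_add_iff 1).mpr (summable_geometric_of_lt_one (norm_nonneg q) hq)

variable (A : Type*) [CommRing A]

/-- The generating series `∑ p(n) Xⁿ` of the partition function. -/
noncomputable def partitionSeries : A⟦X⟧ :=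
  PowerSeries.mk fun n ↦ (Fintype.card n.Partition : A)

/-- The generating series of the number of `m`-regular partitions. -/
noncomputable def regularPartitionSeries (m : ℕ) : A⟦X⟧ :=
  PowerSeries.mk fun n ↦ (numRegularPartitions m n : A)

theorem pentagonalSeries_mul_partitionSeries : pentagonalSeries A * partitionSeries A = 1 := by
  let _ : TopologicalSpace A := ⊥
  have _ : DiscreteTopology A := ⟨rfl⟩
  have hprod := (WithPiTopology.hasProd_one_sub_X_pow A).mul
    (Nat.Partition.hasProd_powerSeriesMk_card_restricted A fun _ ↦ True)
  have hfactor (i : ℕ) : (1 - X ^ (i + 1)) * ∑' j : ℕ, (X : A⟦X⟧) ^ ((i + 1) * j) = 1 := by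
    simp only [pow_mul]
    rw [mul_comm]
    exact WithPiTopology.tsum_pow_mul_one_sub_of_constantCoeff_eq_zero (by simp)
  simp only [if_true, hfactor] at hprod
  simpa [partitionSeries, Nat.Partition.restricted] using hprod.unique hasProd_one

theorem evalsTo_partitionSeries : EvalsTo (partitionSeries ℂ) fun q ↦ (eulerProduct q)⁻¹ :=
  evalsTo_pentagonalSeries.inv (fun _ ↦ eulerProduct_ne_zero)
    (pentagonalSeries_mul_partitionSeries ℂ)

theorem pentagonalSeries_pow_mul_partitionSeries_pow (n : ℕ) :
    pentagonalSeries A ^ n * partitionSeries A ^ n = 1 := by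
  rw [← mul_pow, pentagonalSeries_mul_partitionSeries, one_pow]

theorem constantCoeff_partitionSeries : constantCoeff (partitionSeries A) = 1 := by
  simp [partitionSeries, ← coeff_zero_eq_constantCoeff_apply]

theorem constantCoeff_pentagonalSeries : constantCoeff (pentagonalSeries A) = 1 := by
  simpa [constantCoeff_partitionSeries] using
    congrArg constantCoeff (pentagonalSeries_mul_partitionSeries A)

theorem continuous_expand [TopologicalSpace A] {m : ℕ} (hm : m ≠ 0) :
    Continuous (PowerSeries.expand m hm : A⟦X⟧ →ₐ[A] A⟦X⟧) := by
  refine continuous_iff_continuousAt.mpr fun F ↦ ?_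
  refine (WithPiTopology.tendsto_iff_coeff_tendsto _ _ _ _).mpr fun n ↦ ?_
  simp only [coeff_expand]
  split_ifs
  · exact (WithPiTopology.continuous_coeff A (n / m)).tendsto F
  · exact tendsto_const_nhds

theorem pentagonalSeries_mul_regularPartitionSeries {m : ℕ} (hm : m ≠ 0) :
    pentagonalSeries A * regularPartitionSeries A m = (pentagonalSeries A).expand m hm := by
  let _ : TopologicalSpace A := ⊥
  have _ : DiscreteTopology A := ⟨rfl⟩
  have hprod := (WithPiTopology.hasProd_one_sub_X_pow A).mul
    (Nat.Partition.hasProd_powerSeriesMk_card_countRestricted A (Nat.pos_of_ne_zero hm))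
  have hfactor (i : ℕ) : (1 - X ^ (i + 1)) * ∑ j ∈ Finset.range m, (X : A⟦X⟧) ^ ((i + 1) * j) =
      PowerSeries.expand m hm (1 - X ^ (i + 1)) := by
    simp only [pow_mul, mul_neg_geom_sum, map_sub, map_one, map_pow, expand_X]
    rw [← pow_mul, ← pow_mul, mul_comm]
  simp only [hfactor] at hprod
  have hseries : regularPartitionSeries A m =
      PowerSeries.mk fun n ↦ ((Nat.Partition.countRestricted n m).card : A) := by
    ext n
    rw [regularPartitionSeries, coeff_mk, coeff_mk, numRegularPartitions,
      ← Nat.Partition.card_restricted_eq_card_countRestricted n (Nat.pos_of_ne_zero hm),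
      Nat.card_eq_fintype_card, Fintype.card_subtype]
    rfl
  rw [hseries]
  exact hprod.unique ((WithPiTopology.hasProd_one_sub_X_pow A).map _ (continuous_expand A hm))

theorem regularPartitionSeries_eq {m : ℕ} (hm : m ≠ 0) :
    regularPartitionSeries A m = partitionSeries A * (pentagonalSeries A).expand m hm := by
  rw [← pentagonalSeries_mul_regularPartitionSeries A hm, ← mul_assoc,
    mul_comm (partitionSeries A), pentagonalSeries_mul_partitionSeries, one_mul]

/-- Multipartitions of `n`, grouped by the sizes of their components. -/
def multipartitionEquiv (t n : ℕ) :
    {f : Fin t → Σ k : ℕ, k.Partition // (∑ i, (f i).1) = n} ≃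
      Σ l : Finset.finAntidiagonal t n, ∀ i, (l.1 i).Partition where
  toFun f := ⟨⟨fun i ↦ (f.1 i).1, Finset.mem_finAntidiagonal.2 f.2⟩, fun i ↦ (f.1 i).2⟩
  invFun l := ⟨fun i ↦ ⟨l.1.1 i, l.2 i⟩, Finset.mem_finAntidiagonal.1 l.1.2⟩
  left_inv _ := rfl
  right_inv _ := rfl

theorem numMultipartitions_eq_sum (t n : ℕ) : numMultipartitions t n =
    ∑ l ∈ Finset.finAntidiagonal t n, ∏ i, Fintype.card (l i).Partition := by
  rw [numMultipartitions, Nat.card_congr (multipartitionEquiv t n), Nat.card_eq_fintype_card,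
    Fintype.card_sigma]
  simp only [Fintype.card_pi]
  exact Finset.sum_coe_sort (Finset.finAntidiagonal t n)
    fun l ↦ ∏ i, Fintype.card (l i).Partition

theorem coeff_partitionSeries_pow (t n : ℕ) :
    coeff n (partitionSeries A ^ t) = numMultipartitions t n := by
  have hconst : partitionSeries A ^ t = ∏ _i : Fin t, partitionSeries A := by simp
  rw [hconst, coeff_prod, numMultipartitions_eq_sum, Nat.cast_sum]
  refine Finset.sum_bij' (fun l _ ↦ (l : Fin t → ℕ))
    (fun l _ ↦ Finsupp.equivFunOnFinite.symm l) ?_ ?_ ?_ ?_ ?_ <;>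
  simp [partitionSeries, Finset.mem_finsuppAntidiag, Finset.mem_finAntidiagonal]

variable {A} {B : Type*} [CommRing B] (φ : A →+* B)

theorem map_partitionSeries : PowerSeries.map φ (partitionSeries A) = partitionSeries B := by
  ext n
  simp [partitionSeries]

theorem map_pentagonalSeries : PowerSeries.map φ (pentagonalSeries A) = pentagonalSeries B := by
  refine left_inv_eq_right_inv (a := partitionSeries B) ?_ ?_
  · rw [← map_partitionSeries φ, ← map_mul, pentagonalSeries_mul_partitionSeries, map_one]
  · rw [mul_comm, pentagonalSeries_mul_partitionSeries]

end EulerProduct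

/-! ### Level-one modular forms -/

section LevelOne

/-- `IsLevelOneQExpansion k F` says that `F` is the `q`-expansion at infinity of a modular form of
weight `k` for `SL(2, ℤ)`. -/
def IsLevelOneQExpansion (k : ℤ) (F : ℂ⟦X⟧) : Prop :=
  ∃ f : ModularForm 𝒮ℒ k, qExpansion 1 f = F

theorem EvalsTo.qExpansion_eq {F : ℂ⟦X⟧} {g : ℂ → ℂ} {k : ℤ} {M : Type*} [FunLike M ℍ ℂ]
    [ModularFormClass M 𝒮ℒ k] {f : M} (hF : EvalsTo F g) (hf : ∀ z : ℍ, f z = g (qParam 1 z)) :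
    qExpansion 1 f = F := by
  ext m
  refine (ModularFormClass.qExpansion_coeff_unique one_pos one_mem_strictPeriods_SL
    (c := fun m ↦ coeff m F) (fun z ↦ ?_) m).symm
  rw [hf]
  exact hF _ (by simpa using norm_qParam_lt_one 1 z)

theorem EvalsTo.isLevelOneQExpansion {F : ℂ⟦X⟧} {g : ℂ → ℂ} {k : ℤ} {f : ℍ → ℂ} (hF : EvalsTo F g)
    (hf : ∀ z : ℍ, f z = g (qParam 1 z)) (hslash : ∀ γ : SL(2, ℤ), f ∣[k] γ = f) :
    IsLevelOneQExpansion k F := by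
  have hq (z : ℍ) : ‖qParam 1 z‖ < 1 := by simpa using norm_qParam_lt_one 1 z
  have hbdd : IsBoundedAtImInfty f :=
    isBoundedAtImInfty_of_hasSum_qExpansion (c := fun m ↦ coeff m F) one_pos fun z ↦
      (hf z).symm ▸ hF _ (hq z)
  have hholo : MDiff f := by
    refine mdifferentiable_iff.mpr (DifferentiableOn.congr (f := g ∘ qParam 1) ?_ fun z hz ↦ ?_)
    · exact hF.differentiableOn.comp differentiable_qParam.differentiableOn
        fun z hz ↦ mem_ball_zero_iff.mpr (hq ⟨z, hz⟩)
    · simp [ofComplex_apply_of_im_pos hz, hf]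
  let form : ModularForm 𝒮ℒ k :=
    { toFun := f
      slash_action_eq' := by rintro _ ⟨γ, rfl⟩; exact hslash γ
      holo' := hholo
      bdd_at_cusps' := fun hc ↦ by
        rw [Subgroup.IsArithmetic.isCusp_iff_isCusp_SL2Z] at hc
        refine (OnePoint.isBoundedAt_iff_forall_SL2Z hc).mpr fun γ _ ↦ ?_
        exact (hslash γ).symm ▸ hbdd }
  exact ⟨form, hF.qExpansion_eq (f := form) hf⟩

theorem eta_eq_qParam_mul_eulerProduct (z : ℂ) :
    η z = qParam 24 z * eulerProduct (qParam 1 z) := rfl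

theorem qParam_pow (h : ℝ) (n : ℕ) (z : ℂ) : qParam h z ^ n = qParam h (n * z) := by
  simp only [qParam, ← Complex.exp_nat_mul]
  ring_nf

theorem qParam_pow_eq_div (h : ℝ) {n : ℕ} (z : ℂ) :
    qParam h z ^ n = qParam (h / n) z := by
  simp only [qParam, ← Complex.exp_nat_mul, Complex.ofReal_div, Complex.ofReal_natCast]
  congr 1
  field_simp

theorem qExpansion_discriminant :
    qExpansion 1 ModularForm.discriminant = X * pentagonalSeries ℂ ^ 24 := by
  have hseries := (EvalsTo.X_pow 1).mul (evalsTo_pentagonalSeries.pow 24)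
  rw [← CuspForm.coe_discriminant, hseries.qExpansion_eq, pow_one]
  intro z
  rw [CuspForm.coe_discriminant, ModularForm.discriminant, eta_eq_qParam_mul_eulerProduct, mul_pow,
    qParam_pow_eq_div, pow_one]
  norm_num

namespace IsLevelOneQExpansion

variable {k : ℤ} {F G : ℂ⟦X⟧}

theorem sub (hF : IsLevelOneQExpansion k F) (hG : IsLevelOneQExpansion k G) :
    IsLevelOneQExpansion k (F - G) := by
  obtain ⟨f, rfl⟩ := hF
  obtain ⟨g, rfl⟩ := hG
  exact ⟨f - g, ModularForm.qExpansion_sub one_pos one_mem_strictPeriods_SL f g⟩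

theorem C_mul (c : ℂ) (hF : IsLevelOneQExpansion k F) : IsLevelOneQExpansion k (C c * F) := by
  obtain ⟨f, rfl⟩ := hF
  refine ⟨c • f, ?_⟩
  rw [← smul_eq_C_mul]
  exact ModularForm.qExpansion_smul one_pos one_mem_strictPeriods_SL c f

theorem pow (hF : IsLevelOneQExpansion k F) (n : ℕ) : IsLevelOneQExpansion (n * k) (F ^ n) := by
  obtain ⟨f, rfl⟩ := hF
  exact ⟨f.pow n, ModularForm.qExpansion_pow one_pos one_mem_strictPeriods_SL f n⟩

theorem eq_zero_of_neg (hF : IsLevelOneQExpansion k F) (hk : k < 0) : F = 0 := by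
  obtain ⟨f, rfl⟩ := hF
  rw [ModularFormClass.levelOne_neg_weight_eq_zero hk f, qExpansion_zero]

theorem exists_eq_X_mul (hF : IsLevelOneQExpansion k F) (h0 : coeff 0 F = 0) :
    ∃ G, IsLevelOneQExpansion (k - 12) G ∧ F = X * pentagonalSeries ℂ ^ 24 * G := by
  obtain ⟨f, rfl⟩ := hF
  refine ⟨_, ⟨CuspForm.discriminantEquiv (toCuspForm f h0), rfl⟩, ?_⟩
  rw [← qExpansion_discriminant]
  exact qExpansion_eq_qExpansion_discriminant_mul f h0

end IsLevelOneQExpansion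

/-- The Eisenstein series `E₄ = 1 + 240 ∑ σ₃(m) qᵐ`, as an integral power series. -/
noncomputable def eisensteinSeriesFour : ℤ⟦X⟧ :=
  PowerSeries.mk fun m ↦ if m = 0 then 1 else 240 * (ArithmeticFunction.sigma 3 m : ℤ)

theorem isLevelOneQExpansion_eisensteinSeriesFour :
    IsLevelOneQExpansion 4 (eisensteinSeriesFour.map (Int.castRingHom ℂ)) := by
  refine ⟨ModularForm.E₄, PowerSeries.ext fun m ↦ ?_⟩
  refine (EisensteinSeries.E_qExpansion_coeff (k := 4) (by norm_num) (by decide) m).trans ?_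
  have hbernoulli : bernoulli 4 = -1 / 30 := by
    rw [bernoulli_eq_bernoulli'_of_ne_one (by norm_num), bernoulli'_four]
  simp only [eisensteinSeriesFour, coeff_map, coeff_mk, hbernoulli]
  split_ifs
  · simp
  · push_cast; norm_num

theorem map_eisensteinSeriesFour_zmod_two :
    eisensteinSeriesFour.map (Int.castRingHom (ZMod 2)) = 1 := by
  ext m
  rw [eisensteinSeriesFour, coeff_map, coeff_mk, coeff_one]
  split_ifs
  · exact map_one _
  · rw [map_mul, show Int.castRingHom (ZMod 2) 240 = 0 by decide, zero_mul]

theorem coeff_zero_eisensteinSeriesFour_pow (k : ℕ) : coeff 0 (eisensteinSeriesFour ^ k) = 1 := by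
  rw [coeff_zero_eq_constantCoeff_apply, map_pow, ← coeff_zero_eq_constantCoeff_apply,
    eisensteinSeriesFour, coeff_mk, if_pos rfl, one_pow]

theorem IsLevelOneQExpansion.exists_integral_eq_X_mul {k : ℤ} {F : ℤ⟦X⟧}
    (hF : IsLevelOneQExpansion k (F.map (Int.castRingHom ℂ))) (h0 : coeff 0 F = 0) :
    ∃ G : ℤ⟦X⟧, IsLevelOneQExpansion (k - 12) (G.map (Int.castRingHom ℂ)) ∧
      F = X * pentagonalSeries ℤ ^ 24 * G := by
  obtain ⟨F', rfl⟩ := X_dvd_iff.mpr (coeff_zero_eq_constantCoeff_apply F ▸ h0)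
  obtain ⟨G, hG, hFG⟩ := hF.exists_eq_X_mul (by simp)
  refine ⟨partitionSeries ℤ ^ 24 * F', ?_, by
    rw [mul_assoc, ← mul_assoc _ _ F', pentagonalSeries_pow_mul_partitionSeries_pow, one_mul]⟩
  convert hG
  rw [map_mul, map_X, mul_assoc] at hFG
  rw [map_mul, map_pow, map_partitionSeries, mul_left_cancel₀ X_ne_zero hFG, ← mul_assoc,
    mul_comm (_ ^ 24), pentagonalSeries_pow_mul_partitionSeries_pow, one_mul]

theorem IsLevelOneQExpansion.map_eq_zero_of_X_pow_dvd {A : Type*} [CommRing A] {k : ℕ} {F : ℤ⟦X⟧}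
    (hF : IsLevelOneQExpansion (4 * k) (F.map (Int.castRingHom ℂ)))
    (hX : X ^ (k / 3 + 1) ∣ F.map (Int.castRingHom A)) : F.map (Int.castRingHom A) = 0 := by
  -- Subtracting a multiple of `E₄ ^ k` removes the constant term; then divide by the discriminant.
  induction k using Nat.strong_induction_on generalizing F with
  | _ k ih =>
  have hF0 : Int.castRingHom A (coeff 0 F) = 0 := by
    rw [← coeff_map]
    exact X_pow_dvd_iff.mp hX 0 (Nat.succ_pos _)
  set F₁ : ℤ⟦X⟧ := F - C (coeff 0 F) * eisensteinSeriesFour ^ k with hF₁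
  have hmap : F₁.map (Int.castRingHom A) = F.map (Int.castRingHom A) := by
    rw [hF₁, map_sub, map_mul, PowerSeries.map_C, hF0, map_zero, zero_mul, sub_zero]
  have hF₁form : IsLevelOneQExpansion (4 * k) (F₁.map (Int.castRingHom ℂ)) := by
    rw [hF₁, map_sub, map_mul, PowerSeries.map_C, map_pow, mul_comm (4 : ℤ)]
    rw [mul_comm (4 : ℤ)] at hF
    exact hF.sub ((isLevelOneQExpansion_eisensteinSeriesFour.pow k).C_mul _)
  obtain ⟨G, hG, hFG⟩ := hF₁form.exists_integral_eq_X_mul (by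
    rw [hF₁, map_sub, coeff_C_mul, coeff_zero_eisensteinSeriesFour_pow, mul_one, sub_self])
  rw [← hmap, hFG, map_mul, map_mul, map_X, map_pow, map_pentagonalSeries]
  suffices hG0 : G.map (Int.castRingHom A) = 0 by rw [hG0, mul_zero]
  obtain hk | hk := lt_or_ge k 3
  · have hG0 : G = 0 := map_injective _ Int.cast_injective
      ((hG.eq_zero_of_neg (by lia)).trans (map_zero _).symm)
    rw [hG0, map_zero]
  · refine ih (k - 3) (by lia) (by convert hG using 1; lia) ?_
    rw [← hmap, hFG, map_mul, map_mul, map_X, mul_assoc,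
      show k / 3 + 1 = (k - 3) / 3 + 1 + 1 by lia, pow_succ'] at hX
    obtain ⟨Q, hQ⟩ := hX
    have hQ' := X_mul_cancel (hQ.trans (mul_assoc _ _ _))
    rw [map_pow, map_pentagonalSeries] at hQ'
    refine ⟨partitionSeries A ^ 24 * Q, ?_⟩
    rw [mul_left_comm, ← hQ', ← mul_assoc, mul_comm (partitionSeries A ^ 24),
      pentagonalSeries_pow_mul_partitionSeries_pow, one_mul]

end LevelOne

/-! ### The cubic multiplier of powers of `η⁸` -/

section CubicCharacter

open ModularGroup (S T)

/-- The exponent of the character of `SL(2, ℤ)` of order three by which `η⁸` transforms: the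
character takes the value `exp (2πi/3)` to the power `cubicExponent γ` at `γ`. -/
def cubicExponent (γ : SL(2, ℤ)) : ZMod 3 :=
  ((γ 0 0 : ZMod 3) + γ 1 1) * γ 1 0 - γ 0 1 * γ 1 1 * ((γ 1 0 : ZMod 3) ^ 2 - 1)

theorem cubicExponent_T_mul (γ : SL(2, ℤ)) : cubicExponent (T * γ) = cubicExponent γ + 1 := by
  have hdet := congrArg (Int.cast : ℤ → ZMod 3) γ.det_coe
  simp only [Matrix.det_fin_two, Int.cast_sub, Int.cast_mul, Int.cast_one] at hdet
  simp only [cubicExponent, Matrix.SpecialLinearGroup.coe_mul, ModularGroup.coe_T,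
    Matrix.mul_apply, Fin.sum_univ_two, Matrix.of_apply, Matrix.cons_val, Int.cast_add,
    Int.cast_mul, Int.cast_one, Int.cast_zero]
  generalize (γ 0 0 : ZMod 3) = a, (γ 0 1 : ZMod 3) = b, (γ 1 0 : ZMod 3) = c,
    (γ 1 1 : ZMod 3) = d at hdet ⊢
  revert a b c d
  decide

theorem cubicExponent_S_mul (γ : SL(2, ℤ)) : cubicExponent (S * γ) = cubicExponent γ := by
  have hdet := congrArg (Int.cast : ℤ → ZMod 3) γ.det_coe
  simp only [Matrix.det_fin_two, Int.cast_sub, Int.cast_mul, Int.cast_one] at hdet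
  simp only [cubicExponent, Matrix.SpecialLinearGroup.coe_mul, ModularGroup.coe_S,
    Matrix.mul_apply, Fin.sum_univ_two, Matrix.of_apply, Matrix.cons_val, Int.cast_add,
    Int.cast_mul, Int.cast_neg, Int.cast_one, Int.cast_zero]
  generalize (γ 0 0 : ZMod 3) = a, (γ 0 1 : ZMod 3) = b, (γ 1 0 : ZMod 3) = c,
    (γ 1 1 : ZMod 3) = d at hdet ⊢
  revert a b c d
  decide

theorem cubicExponent_T_zpow (m : ℤ) : cubicExponent (T ^ m) = m := by
  simp [cubicExponent, ModularGroup.coe_T_zpow]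

/-- `HasCubicCharacter k n f` says that `f` transforms in weight `k` under `SL(2, ℤ)` by the `n`-th
power of the character of `η⁸`. -/
def HasCubicCharacter (k : ℤ) (n : ZMod 3) (f : ℍ → ℂ) : Prop :=
  ∀ γ : SL(2, ℤ), f ∣[k] γ = ZMod.stdAddChar (n * cubicExponent γ) • f

namespace HasCubicCharacter

variable {k l : ℤ} {m n : ZMod 3} {f g : ℍ → ℂ}

theorem of_generators (hS : f ∣[k] S = f) (hT : f ∣[k] T = ZMod.stdAddChar n • f) :
    HasCubicCharacter k n f := by
  have hSmul (γ : SL(2, ℤ)) : f ∣[k] (S * γ) = f ∣[k] γ := by rw [SlashAction.slash_mul, hS]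
  have hTmul (γ : SL(2, ℤ)) : f ∣[k] (T * γ) = ZMod.stdAddChar n • f ∣[k] γ := by
    rw [SlashAction.slash_mul, hT, SL_smul_slash]
  have hψT (γ : SL(2, ℤ)) : ZMod.stdAddChar (n * cubicExponent (T * γ)) =
      ZMod.stdAddChar n * ZMod.stdAddChar (n * cubicExponent γ) := by
    rw [cubicExponent_T_mul, mul_add, mul_one, add_comm, AddChar.map_add_eq_mul]
  intro γ
  have hγ : γ ∈ Subgroup.closure {S, T} := by
    rw [SpecialLinearGroup.SL2Z_generators]; trivial
  induction hγ using Subgroup.closure_induction_left with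
  | one => simp [cubicExponent]
  | mul_left x hx γ _ ih =>
    obtain rfl | rfl := hx
    · rw [hSmul, ih, cubicExponent_S_mul]
    · rw [hTmul, ih, hψT, smul_smul]
  | inv_mul_cancel x hx γ _ ih =>
    obtain rfl | rfl := hx
    · rw [← hSmul, ← cubicExponent_S_mul, mul_inv_cancel_left, ih]
    · have hne : ZMod.stdAddChar n ≠ 0 := (ZMod.stdAddChar.val_isUnit n).ne_zero
      refine smul_right_injective _ hne ?_
      dsimp only
      rw [← hTmul, smul_smul, ← hψT, mul_inv_cancel_left, ih]

theorem mul (hf : HasCubicCharacter k m f) (hg : HasCubicCharacter l n g) :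
    HasCubicCharacter (k + l) (m + n) (f * g) := by
  intro γ
  rw [mul_slash_SL2, hf, hg, smul_mul_smul_comm, ← AddChar.map_add_eq_mul, add_mul]

theorem slash_T_zpow (hf : HasCubicCharacter k n f) (m : ℤ) :
    f ∣[k] (T ^ m) = ZMod.stdAddChar (n * (m : ZMod 3)) • f := by
  rw [hf, cubicExponent_T_zpow]

end HasCubicCharacter

theorem qParam_add (h : ℝ) (z w : ℂ) : qParam h (z + w) = qParam h z * qParam h w := by
  rw [qParam, mul_add, add_div, Complex.exp_add, qParam, qParam]

theorem eta_add_one_pow_eight (z : ℂ) :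
    η (z + 1) ^ 8 = ZMod.stdAddChar (1 : ZMod 3) * η z ^ 8 := by
  have hstd : ZMod.stdAddChar (1 : ZMod 3) = qParam 24 1 ^ 8 := by
    rw [qParam_pow_eq_div, ← Int.cast_one, ZMod.stdAddChar_coe, qParam]
    norm_num
  have hperiod : qParam 1 (z + 1) = qParam 1 z := by
    rw [qParam_add, show qParam 1 1 = 1 by simp [qParam], mul_one]
  rw [eta_eq_qParam_mul_eulerProduct, eta_eq_qParam_mul_eulerProduct, hstd, hperiod, qParam_add]
  ring

theorem eta_neg_one_div_pow_eight (z : ℍ) : η (-1 / z) ^ 8 = (z : ℂ) ^ 4 * η z ^ 8 := by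
  have hsqrt {w : ℂ} : Complex.sqrt w ^ 8 = w ^ 4 := by
    rw [show 8 = 2 * 4 from rfl, pow_mul]
    simp [Complex.sqrt]
  have heta : η (-1 / z) = (Complex.sqrt Complex.I)⁻¹ * (Complex.sqrt z * η z) :=
    eta_comp_eq_csqrt_I_inv z.2
  rw [heta, mul_pow, mul_pow, inv_pow, hsqrt, hsqrt, Complex.I_pow_four, inv_one, one_mul]

theorem hasCubicCharacter_eta_zpow (n : ℤ) :
    HasCubicCharacter (4 * n) n fun z ↦ (η z ^ 8) ^ n := by
  refine .of_generators (funext fun z ↦ ?_) (funext fun z ↦ ?_)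
  · have hz := z.ne_zero
    have hS : (-(z : ℂ))⁻¹ = -1 / z := by rw [neg_div, one_div, inv_neg]
    rw [SL_slash_apply, modular_S_smul, UpperHalfPlane.coe_mk, ModularGroup.denom_S, hS,
      eta_neg_one_div_pow_eight, mul_zpow, ← zpow_natCast, ← zpow_mul, mul_right_comm,
      ← zpow_add₀ hz]
    simp
  · rw [SL_slash_apply, modular_T_smul, coe_vadd, add_comm, Complex.ofReal_one,
      eta_add_one_pow_eight, mul_zpow, ← AddChar.map_zsmul_eq_zpow]
    simp [denom, ModularGroup.coe_T]

end CubicCharacter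

/-! ### A Hecke operator -/

section Hecke

open ModularGroup (S T)
open Matrix.GeneralLinearGroup (mkOfDetNeZero)

theorem three_ne_zero_zmod {p : ℕ} [Fact p.Prime] (hp : p ≠ 3) : (3 : ZMod p) ≠ 0 := by
  have h3 : ¬ p ∣ 3 := fun h ↦ hp ((Nat.prime_dvd_prime_iff_eq Fact.out Nat.prime_three).mp h)
  exact_mod_cast mt (ZMod.natCast_eq_zero_iff 3 p).mp h3

theorem nine_ne_zero_zmod {p : ℕ} [Fact p.Prime] (hp : p ≠ 3) : (9 : ZMod p) ≠ 0 := by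
  rw [show (9 : ZMod p) = 3 ^ 2 by norm_num]
  exact pow_ne_zero 2 (three_ne_zero_zmod hp)

variable (p : ℕ) [NeZero p]

/-- The matrix of the map `z ↦ (z + 3j) / p`. The factor `3` makes the translations by multiples of
`p`, by which two choices of `j` modulo `p` differ, act trivially on functions with a cubic
character. -/
noncomputable def heckeUpper (j : ℤ) : GL (Fin 2) ℝ :=
  mkOfDetNeZero !![1, 3 * j; 0, p] (by simp [NeZero.ne])

/-- The matrix of the map `z ↦ p z`. -/
noncomputable def heckeDiagonal : GL (Fin 2) ℝ :=
  mkOfDetNeZero !![p, 0; 0, 1] (by simp [NeZero.ne])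

/-- The Hecke operator at `p` in weight `k`, without its usual normalisation. -/
noncomputable def heckeSum (k : ℤ) (f : ℍ → ℂ) : ℍ → ℂ :=
  ∑ j : ZMod p, f ∣[k] heckeUpper p j.val + f ∣[k] heckeDiagonal p

theorem σ_heckeUpper (j : ℤ) (w : ℂ) : σ (heckeUpper p j) w = w := by
  simp [σ, heckeUpper, NeZero.pos]

theorem σ_heckeDiagonal (w : ℂ) : σ (heckeDiagonal p) w = w := by
  simp [σ, heckeDiagonal, NeZero.pos]

theorem T_zpow_mul_heckeUpper {i j m : ℤ} (h : 3 * i = 3 * j + m * p) :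
    ((T ^ m : SL(2, ℤ)) : GL (Fin 2) ℝ) * heckeUpper p j = heckeUpper p i := by
  have h' : (3 * i : ℝ) = 3 * j + m * p := by exact_mod_cast h
  ext a b
  fin_cases a <;> fin_cases b <;>
    simp [-map_zpow, heckeUpper, ModularGroup.coe_T_zpow, Matrix.mul_apply, h', mkOfDetNeZero]

theorem heckeUpper_mul_T {i j m : ℤ} (h : 3 * i + 1 = 3 * j + m * p) :
    heckeUpper p i * (T : GL (Fin 2) ℝ) =
      ((T ^ m : SL(2, ℤ)) : GL (Fin 2) ℝ) * heckeUpper p j := by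
  have h' : (1 + 3 * i : ℝ) = 3 * j + m * p := by exact_mod_cast (add_comm _ _).trans h
  ext a b
  fin_cases a <;> fin_cases b <;>
    simp [-map_zpow, heckeUpper, ModularGroup.coe_T, ModularGroup.coe_T_zpow,
      Matrix.mul_apply, mkOfDetNeZero, h']

theorem heckeDiagonal_mul_T : heckeDiagonal p * (T : GL (Fin 2) ℝ) =
    ((T ^ (p : ℤ) : SL(2, ℤ)) : GL (Fin 2) ℝ) * heckeDiagonal p := by
  ext a b
  fin_cases a <;> fin_cases b <;>
    simp [-zpow_natCast, -map_pow, -map_zpow, heckeDiagonal, ModularGroup.coe_T,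
      ModularGroup.coe_T_zpow, Matrix.mul_apply, mkOfDetNeZero]

theorem heckeDiagonal_mul_S : heckeDiagonal p * (S : GL (Fin 2) ℝ) =
    (S : GL (Fin 2) ℝ) * heckeUpper p 0 := by
  ext a b
  fin_cases a <;> fin_cases b <;>
    simp [heckeDiagonal, heckeUpper, ModularGroup.coe_S, Matrix.mul_apply, mkOfDetNeZero]

theorem heckeUpper_zero_mul_S : heckeUpper p 0 * (S : GL (Fin 2) ℝ) =
    (S : GL (Fin 2) ℝ) * heckeDiagonal p := by
  ext a b
  fin_cases a <;> fin_cases b <;>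
    simp [heckeDiagonal, heckeUpper, ModularGroup.coe_S, Matrix.mul_apply, mkOfDetNeZero]

theorem exists_heckeUpper_mul_S {i j : ℤ} (h : (p : ℤ) ∣ 9 * i * j + 1) :
    ∃ γ : SL(2, ℤ), cubicExponent γ = 0 ∧
      heckeUpper p i * (S : GL (Fin 2) ℝ) = (γ : GL (Fin 2) ℝ) * heckeUpper p j := by
  obtain ⟨b, hb⟩ := h
  have hb' : -(1 : ℝ) = 3 * i * (3 * j) + -(b * p) := by
    exact_mod_cast (by linear_combination -hb : -(1 : ℤ) = 3 * i * (3 * j) + -(b * p))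
  obtain ⟨γ, hγ⟩ : ∃ γ : SL(2, ℤ), (γ : Matrix (Fin 2) (Fin 2) ℤ) = !![3 * i, -b; p, -3 * j] :=
    ⟨⟨_, by rw [Matrix.det_fin_two_of]; linear_combination -hb⟩, rfl⟩
  refine ⟨γ, ?_, ?_⟩
  · simp [cubicExponent, hγ, show (3 : ZMod 3) = 0 from rfl]
  · ext a b
    fin_cases a <;> fin_cases b <;>
      simp [heckeUpper, ModularGroup.coe_S, Matrix.mul_apply, mkOfDetNeZero, hγ, hb',
        mul_comm (p : ℝ)]

theorem smul_slash_heckeUpper (k : ℤ) (c : ℂ) (f : ℍ → ℂ) (j : ℤ) :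
    (c • f) ∣[k] heckeUpper p j = c • f ∣[k] heckeUpper p j := by
  rw [smul_slash, σ_heckeUpper]

theorem smul_slash_heckeDiagonal (k : ℤ) (c : ℂ) (f : ℍ → ℂ) :
    (c • f) ∣[k] heckeDiagonal p = c • f ∣[k] heckeDiagonal p := by
  rw [smul_slash, σ_heckeDiagonal]

theorem coe_heckeUpper_smul (j : ℤ) (z : ℍ) : ((heckeUpper p j • z : ℍ) : ℂ) = (z + 3 * j) / p := by
  rw [coe_smul_of_det_pos (by simp [heckeUpper, NeZero.pos])]
  simp [num, denom, heckeUpper]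

theorem coe_heckeDiagonal_smul (z : ℍ) : ((heckeDiagonal p • z : ℍ) : ℂ) = p * z := by
  rw [coe_smul_of_det_pos (by simp [heckeDiagonal, NeZero.pos])]
  simp [num, denom, heckeDiagonal]

theorem heckeSum_apply (k : ℤ) (f : ℍ → ℂ) (z : ℍ) : heckeSum p k f z =
    (p : ℂ)⁻¹ * ∑ j : ZMod p, f (heckeUpper p j.val • z) +
      (p : ℂ) ^ (k - 1) * f (heckeDiagonal p • z) := by
  have hp : (p : ℂ) ≠ 0 := NeZero.ne _
  rw [heckeSum, Pi.add_apply, Finset.sum_apply, Finset.mul_sum]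
  congr 1
  · refine Finset.sum_congr rfl fun j _ ↦ ?_
    rw [slash_apply, σ_heckeUpper, mul_assoc, mul_comm]
    congr 1
    simp only [heckeUpper, denom]
    simp [zpow_sub_one₀ hp, mul_right_comm _ (p : ℂ)⁻¹, zpow_ne_zero k hp]
  · rw [slash_apply, σ_heckeDiagonal, mul_comm (f _)]
    simp [heckeDiagonal, denom]

namespace HasCubicCharacter

variable {p} {k : ℤ} {n : ZMod 3} {f : ℍ → ℂ}

theorem slash_heckeUpper_val (hf : HasCubicCharacter k n f) (i : ℤ) :
    f ∣[k] heckeUpper p (i : ZMod p).val = f ∣[k] heckeUpper p i := by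
  obtain ⟨m, hm⟩ := (ZMod.intCast_eq_intCast_iff_dvd_sub i ((i : ZMod p).val : ℤ) p).mp (by simp)
  rw [← T_zpow_mul_heckeUpper p (m := 3 * m) (show 3 * ((i : ZMod p).val : ℤ) = 3 * i + 3 * m * p by
    linear_combination 3 * hm), SlashAction.slash_mul, ← SL_slash, hf.slash_T_zpow]
  simp [show (3 : ZMod 3) = 0 from rfl]

theorem slash_heckeUpper_slash_T (hf : HasCubicCharacter k n f) {e : ℤ}
    (he : (p : ℤ) ^ 2 = 3 * e + 1) (j : ZMod p) :
    (f ∣[k] heckeUpper p j.val) ∣[k] T =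
      ZMod.stdAddChar (n * (p : ZMod 3)) • f ∣[k] heckeUpper p (j - (e : ZMod p)).val := by
  obtain ⟨i, rfl⟩ := ZMod.intCast_surjective j
  rw [← Int.cast_sub, hf.slash_heckeUpper_val, hf.slash_heckeUpper_val, SL_slash,
    ← SlashAction.slash_mul, heckeUpper_mul_T p (j := i - e) (m := p) (by linear_combination -he),
    SlashAction.slash_mul, ← SL_slash, hf.slash_T_zpow, smul_slash_heckeUpper, Int.cast_natCast]

theorem slash_heckeDiagonal_slash_T (hf : HasCubicCharacter k n f) :
    (f ∣[k] heckeDiagonal p) ∣[k] T =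
      ZMod.stdAddChar (n * (p : ZMod 3)) • f ∣[k] heckeDiagonal p := by
  rw [SL_slash, ← SlashAction.slash_mul, heckeDiagonal_mul_T, SlashAction.slash_mul, ← SL_slash,
    hf.slash_T_zpow, smul_slash_heckeDiagonal, Int.cast_natCast]

theorem slash_S (hf : HasCubicCharacter k n f) : f ∣[k] S = f := by
  rw [hf, ← mul_one S, cubicExponent_S_mul]
  simp [cubicExponent]

theorem slash_heckeUpper_slash_S [Fact p.Prime] (hf : HasCubicCharacter k n f) (hp : p ≠ 3)
    {j : ZMod p} (hj : j ≠ 0) :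
    (f ∣[k] heckeUpper p j.val) ∣[k] S = f ∣[k] heckeUpper p (-(9 * j)⁻¹).val := by
  obtain ⟨i, rfl⟩ := ZMod.intCast_surjective j
  obtain ⟨i', hi'⟩ := ZMod.intCast_surjective (-(9 * (i : ZMod p))⁻¹)
  have hdvd : (p : ℤ) ∣ 9 * i * i' + 1 := by
    rw [← ZMod.intCast_zmod_eq_zero_iff_dvd]
    push_cast
    rw [hi', mul_neg, mul_inv_cancel₀ (mul_ne_zero (nine_ne_zero_zmod hp) hj), neg_add_cancel]
  obtain ⟨γ, hγ, hmul⟩ := exists_heckeUpper_mul_S p hdvd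
  rw [← hi', hf.slash_heckeUpper_val, hf.slash_heckeUpper_val, SL_slash, ← SlashAction.slash_mul,
    hmul, SlashAction.slash_mul, ← SL_slash, hf, hγ, mul_zero, AddChar.map_zero_eq_one, one_smul]

theorem heckeSum_slash_T (hf : HasCubicCharacter k n f) {e : ℤ} (he : (p : ℤ) ^ 2 = 3 * e + 1) :
    heckeSum p k f ∣[k] T = ZMod.stdAddChar (n * (p : ZMod 3)) • heckeSum p k f := by
  rw [heckeSum, SlashAction.add_slash, SlashAction.sum_slash, smul_add, Finset.smul_sum,
    hf.slash_heckeDiagonal_slash_T]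
  congr 1
  simp only [hf.slash_heckeUpper_slash_T he]
  exact Equiv.sum_comp (Equiv.subRight (e : ZMod p)) fun j ↦
    ZMod.stdAddChar (n * (p : ZMod 3)) • f ∣[k] heckeUpper p j.val

theorem heckeSum_slash_S [Fact p.Prime] (hf : HasCubicCharacter k n f) (hp : p ≠ 3) :
    heckeSum p k f ∣[k] S = heckeSum p k f := by
  have h9 : (9 : ZMod p) ≠ 0 := nine_ne_zero_zmod hp
  have hinv : Function.Involutive fun j : ZMod p ↦ -(9 * j)⁻¹ := fun j ↦ by
    rcases eq_or_ne j 0 with rfl | hj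
    · simp
    · field_simp
  have h0 : (f ∣[k] heckeUpper p (0 : ZMod p).val) ∣[k] S = f ∣[k] heckeDiagonal p := by
    rw [ZMod.val_zero, Nat.cast_zero, SL_slash, ← SlashAction.slash_mul, heckeUpper_zero_mul_S,
      SlashAction.slash_mul, ← SL_slash, hf.slash_S]
  have h1 : (f ∣[k] heckeDiagonal p) ∣[k] S = f ∣[k] heckeUpper p (0 : ZMod p).val := by
    rw [ZMod.val_zero, Nat.cast_zero, SL_slash, ← SlashAction.slash_mul, heckeDiagonal_mul_S,
      SlashAction.slash_mul, ← SL_slash, hf.slash_S]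
  have hsum : ∑ j ∈ {0}ᶜ, (f ∣[k] heckeUpper p (j : ZMod p).val) ∣[k] S =
      ∑ j ∈ {0}ᶜ, f ∣[k] heckeUpper p (j : ZMod p).val := by
    refine Finset.sum_equiv hinv.toPerm (by simp [h9]) fun j hj ↦ ?_
    exact hf.slash_heckeUpper_slash_S hp (by simpa using hj)
  rw [heckeSum, SlashAction.add_slash, SlashAction.sum_slash, Fintype.sum_eq_add_sum_compl 0,
    Fintype.sum_eq_add_sum_compl 0, h0, h1, hsum]
  abel

end HasCubicCharacter

theorem hasCubicCharacter_heckeSum {p : ℕ} [Fact p.Prime] (hp : p ≠ 3) {k : ℤ} {n : ZMod 3}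
    {f : ℍ → ℂ} (hf : HasCubicCharacter k n f) :
    HasCubicCharacter k (n * (p : ZMod 3)) (heckeSum p k f) := by
  obtain ⟨e, he⟩ : (3 : ℤ) ∣ p ^ 2 - 1 := by
    have h3 : ¬ 3 ∣ p := fun h ↦
      hp ((Nat.prime_dvd_prime_iff_eq Nat.prime_three Fact.out).mp h).symm
    have hcop : IsCoprime (p : ℤ) 3 :=
      Nat.isCoprime_iff_coprime.mpr ((Nat.prime_three.coprime_iff_not_dvd.mpr h3).symm)
    exact (Int.ModEq.pow_card_sub_one_eq_one Nat.prime_three hcop).symm.dvd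
  exact .of_generators (hf.heckeSum_slash_S hp) (hf.heckeSum_slash_T (e := e) (by linarith))

end Hecke

/-! ### Atkin's operator -/

section AtkinU

variable {A : Type*} [CommRing A]

/-- Atkin's operator `U_p`, which keeps the coefficients at the multiples of `p`. -/
noncomputable def atkinU (p : ℕ) (F : A⟦X⟧) : A⟦X⟧ := PowerSeries.mk fun n ↦ coeff (p * n) F

theorem coeff_atkinU (p : ℕ) (F : A⟦X⟧) (n : ℕ) : coeff n (atkinU p F) = coeff (p * n) F :=
  coeff_mk n _

theorem constantCoeff_atkinU_X_pow_mul (p : ℕ) {δ : ℕ} (hδ : δ ≠ 0) (F : A⟦X⟧) :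
    constantCoeff (atkinU p (X ^ δ * F)) = 0 := by
  rw [← coeff_zero_eq_constantCoeff_apply, coeff_atkinU, mul_zero, coeff_X_pow_mul',
    if_neg (Nat.not_le.mpr (Nat.pos_of_ne_zero hδ))]

theorem map_atkinU {B : Type*} [CommRing B] (φ : A →+* B) (p : ℕ) (F : A⟦X⟧) :
    (atkinU p F).map φ = atkinU p (F.map φ) := by
  ext n
  simp only [coeff_map, coeff_atkinU]

theorem atkinU_expand {p m : ℕ} (hm : m ≠ 0) (hpm : p.Coprime m) (F : A⟦X⟧) :
    atkinU p (F.expand m hm) = (atkinU p F).expand m hm := by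
  ext n
  simp only [coeff_atkinU, coeff_expand, hpm.symm.dvd_mul_left]
  split_ifs with hn
  · rw [Nat.mul_div_assoc p hn]
  · rfl

theorem atkinU_mul_expand {p : ℕ} (hp : p ≠ 0) (F G : A⟦X⟧) :
    atkinU p (F * G.expand p hp) = atkinU p F * G := by
  ext n
  rw [coeff_atkinU, coeff_mul, coeff_mul]
  symm
  refine Finset.sum_of_injOn (fun ij ↦ (p * ij.1, p * ij.2)) ?_ ?_ ?_ ?_
  · rintro ⟨i, j⟩ _ ⟨k, l⟩ _ h
    simpa [hp] using h
  · rintro ⟨i, j⟩ h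
    simp only [Finset.mem_coe, Finset.HasAntidiagonal.mem_antidiagonal] at h ⊢
    rw [← mul_add, h]
  · rintro ⟨i, j⟩ hij hnot
    rw [Finset.HasAntidiagonal.mem_antidiagonal] at hij
    rw [coeff_expand_of_not_dvd, mul_zero]
    rintro ⟨l, rfl⟩
    obtain ⟨k, rfl⟩ : p ∣ i := (Nat.dvd_add_left ⟨l, rfl⟩).mp ⟨n, hij⟩
    refine hnot ⟨(k, l), ?_, rfl⟩
    rw [← mul_add] at hij
    simpa using mul_left_cancel₀ hp hij
  · rintro ⟨i, j⟩ _
    rw [coeff_atkinU, coeff_expand_mul]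

variable {p : ℕ} [NeZero p] {F : ℂ⟦X⟧} {f : ℂ → ℂ}

theorem EvalsTo.hasSum_atkinU (hF : EvalsTo F f) {ψ : AddChar (ZMod p) ℂ} (hψ : ψ.IsPrimitive)
    {r : ℂ} (hr : ‖r‖ < 1) :
    HasSum (fun n ↦ coeff n (atkinU p F) * (r ^ p) ^ n) ((p : ℂ)⁻¹ * ∑ j, f (ψ j * r)) := by
  have hsum (n : ℕ) : ∑ j, coeff n F * (ψ j * r) ^ n =
      if p ∣ n then p * (coeff n F * r ^ n) else 0 := by
    simp only [mul_pow, ← AddChar.map_nsmul_eq_pow, nsmul_eq_mul, mul_comm (n : ZMod p)]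
    rw [← Finset.mul_sum, ← Finset.sum_mul, AddChar.sum_mulShift _ hψ, ZMod.card]
    simp only [ZMod.natCast_eq_zero_iff]
    split_ifs
    · ring
    · simp
  have h := (hasSum_sum fun j (_ : j ∈ Finset.univ) ↦ hF (ψ j * r) (by simpa using hr)).mul_left
    (p : ℂ)⁻¹
  simp only [hsum] at h
  rw [← (mul_right_injective₀ (NeZero.ne p)).hasSum_iff] at h
  · refine h.congr_fun fun n ↦ ?_
    simp only [Function.comp_apply, dvd_mul_right, if_true, coeff_atkinU, pow_mul,
      inv_mul_cancel_left₀ (NeZero.ne (p : ℂ))]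
  · intro n hn
    rw [if_neg, mul_zero]
    rintro ⟨m, rfl⟩
    exact hn ⟨m, rfl⟩

theorem EvalsTo.exists_atkinU (hF : EvalsTo F f) {ψ : AddChar (ZMod p) ℂ} (hψ : ψ.IsPrimitive) :
    ∃ g, EvalsTo (atkinU p F) g ∧ ∀ r, ‖r‖ < 1 → ∑ j, f (ψ j * r) = p * g (r ^ p) := by
  have hg : EvalsTo (atkinU p F) fun q ↦ ∑' n, coeff n (atkinU p F) * q ^ n := fun q hq ↦ by
    obtain ⟨r, rfl⟩ := IsAlgClosed.exists_pow_nat_eq q (NeZero.pos p)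
    rw [norm_pow, pow_lt_one_iff_of_nonneg (norm_nonneg r) (NeZero.ne p)] at hq
    exact (hF.hasSum_atkinU hψ hq).summable.hasSum
  refine ⟨_, hg, fun r hr ↦ ?_⟩
  rw [(hF.hasSum_atkinU hψ hr).tsum_eq, mul_inv_cancel_left₀ (NeZero.ne _)]

end AtkinU

/-! ### The Hecke image of `η⁻⁸` -/

section HeckeEta

variable {p δ : ℕ} [NeZero p]

/-- The `q`-expansion of the product of `η ^ (8p)` and `p ^ 5` times the image of `η⁻⁸` under the
Hecke operator at `p`, where `p² = 24δ + 1`. -/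
noncomputable def heckeEtaSeries (A : Type*) [CommRing A] (p : ℕ) [NeZero p] (δ : ℕ) : A⟦X⟧ :=
  pentagonalSeries A ^ (8 * p) * (C ((p : A) ^ 5) * atkinU p (X ^ (8 * δ) * partitionSeries A ^ 8) +
    (partitionSeries A ^ 8).expand p (NeZero.ne p))

theorem map_heckeEtaSeries {A B : Type*} [CommRing A] [CommRing B] (φ : A →+* B) :
    (heckeEtaSeries A p δ).map φ = heckeEtaSeries B p δ := by
  simp only [heckeEtaSeries, map_mul, map_add, map_pow, map_natCast, map_atkinU,
    PowerSeries.map_expand, map_pentagonalSeries, map_partitionSeries, map_X]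

theorem eta_pow_eight (z : ℂ) : η z ^ 8 = qParam 3 z * eulerProduct (qParam 1 z) ^ 8 := by
  rw [eta_eq_qParam_mul_eulerProduct, mul_pow, qParam_pow_eq_div]
  norm_num

theorem qParam_three_pow_eq (hδ : p ^ 2 = 24 * δ + 1) (z : ℂ) (j : ℕ) :
    qParam 3 z ^ p = qParam 1 ((z + 3 * j) / p) ^ (8 * δ) * qParam 3 ((z + 3 * j) / p) := by
  have hp : (p : ℂ) ≠ 0 := NeZero.ne _
  set w := (z + 3 * j) / p with hw
  have hpw : ((p ^ 2 : ℕ) : ℂ) * w = p * z + 3 * (p * j : ℕ) := by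
    rw [hw]; push_cast; field_simp
  have hcube : qParam 1 w = qParam 3 w ^ 3 := by rw [qParam_pow_eq_div]; norm_num
  have hperiod : qParam 3 (3 * (p * j : ℕ)) = 1 := by
    rw [mul_comm, ← qParam_pow, qParam]; simp
  calc qParam 3 z ^ p = qParam 3 (p * z + 3 * (p * j : ℕ)) := by
        rw [qParam_add, hperiod, mul_one, qParam_pow]
    _ = qParam 3 w ^ (24 * δ + 1) := by rw [← hpw, ← qParam_pow, hδ]
    _ = qParam 1 w ^ (8 * δ) * qParam 3 w := by rw [hcube]; ring

theorem qParam_one_add_div (z : ℂ) (j : ZMod p) :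
    qParam 1 ((z + 3 * j.val) / p) = ZMod.stdAddChar.mulShift 3 j * qParam p z := by
  have h3j : (3 * j : ZMod p) = (3 * j.val : ℤ) := by simp
  rw [AddChar.mulShift_apply, h3j, ZMod.stdAddChar_coe, qParam, qParam, ← Complex.exp_add]
  congr 1
  push_cast
  ring

theorem eta_pow_mul_inv_eta_add_div (hδ : p ^ 2 = 24 * δ + 1) (z : ℂ) (j : ℕ) :
    (η z ^ 8) ^ p * (η ((z + 3 * j) / p) ^ 8)⁻¹ = eulerProduct (qParam 1 z) ^ (8 * p) *
      (qParam 1 ((z + 3 * j) / p) ^ (8 * δ) *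
        (eulerProduct (qParam 1 ((z + 3 * j) / p)))⁻¹ ^ 8) := by
  have hne : qParam 3 ((z + 3 * j) / p) ≠ 0 := Complex.exp_ne_zero _
  rw [eta_pow_eight, eta_pow_eight, mul_pow, qParam_three_pow_eq hδ z j, mul_inv, inv_pow,
    ← pow_mul]
  field_simp

theorem eta_pow_mul_inv_eta_mul (p : ℕ) (z : ℂ) :
    (η z ^ 8) ^ p * (η (p * z) ^ 8)⁻¹ =
      eulerProduct (qParam 1 z) ^ (8 * p) * (eulerProduct (qParam 1 z ^ p))⁻¹ ^ 8 := by
  have hne : qParam 3 (p * z) ≠ 0 := Complex.exp_ne_zero _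
  rw [eta_pow_eight, eta_pow_eight, mul_pow, qParam_pow, qParam_pow, mul_inv, inv_pow, ← pow_mul]
  field_simp

/-- The product of `η ^ (8p)` and the image of `η⁻⁸` under the Hecke operator at `p`. The factor
`p ^ 5` makes its `q`-expansion integral. -/
noncomputable def heckeEta (p : ℕ) [NeZero p] : ℍ → ℂ :=
  (p : ℂ) ^ 5 • ((fun z : ℍ ↦ (η z ^ 8) ^ (p : ℤ)) *
    heckeSum p (4 * -1) fun z ↦ (η z ^ 8) ^ (-1 : ℤ))

theorem heckeEta_slash {p : ℕ} [Fact p.Prime] (hp : p ≠ 3) (γ : SL(2, ℤ)) :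
    heckeEta p ∣[4 * ((p : ℤ) - 1)] γ = heckeEta p := by
  have hchar := (hasCubicCharacter_eta_zpow p).mul
    (hasCubicCharacter_heckeSum hp (hasCubicCharacter_eta_zpow (-1))) γ
  rw [show 4 * (p : ℤ) + 4 * -1 = 4 * (p - 1) by ring] at hchar
  rw [heckeEta, SL_smul_slash, hchar]
  simp

theorem heckeEta_apply (hδ : p ^ 2 = 24 * δ + 1) (z : ℍ) :
    heckeEta p z = eulerProduct (qParam 1 z) ^ (8 * p) *
      ((p : ℂ) ^ 4 * ∑ j : ZMod p, (ZMod.stdAddChar.mulShift 3 j * qParam p z) ^ (8 * δ) *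
          (eulerProduct (ZMod.stdAddChar.mulShift 3 j * qParam p z))⁻¹ ^ 8 +
        (eulerProduct (qParam 1 z ^ p))⁻¹ ^ 8) := by
  have hp : (p : ℂ) ≠ 0 := NeZero.ne _
  have hzpow : (p : ℂ) ^ (4 * -1 - 1 : ℤ) = ((p : ℂ) ^ 5)⁻¹ :=
    zpow_neg_coe_of_pos _ (Nat.succ_pos 4)
  calc heckeEta p z
      = (p : ℂ) ^ 4 * ∑ j : ZMod p, (η z ^ 8) ^ p * (η ((z + 3 * j.val) / p) ^ 8)⁻¹ +
          (η z ^ 8) ^ p * (η (p * z) ^ 8)⁻¹ := by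
        simp only [heckeEta, Pi.smul_apply, Pi.mul_apply, heckeSum_apply, coe_heckeUpper_smul,
          coe_heckeDiagonal_smul, smul_eq_mul, zpow_neg_one, zpow_natCast, Int.cast_natCast,
          hzpow, ← Finset.mul_sum]
        field_simp
    _ = _ := by
        simp only [eta_pow_mul_inv_eta_add_div hδ, eta_pow_mul_inv_eta_mul, qParam_one_add_div,
          ← Finset.mul_sum]
        ring

theorem isLevelOneQExpansion_heckeEtaSeries {p : ℕ} [Fact p.Prime] (hδ : p ^ 2 = 24 * δ + 1) :
    IsLevelOneQExpansion (4 * (p - 1)) (heckeEtaSeries ℂ p δ) := by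
  have hp3 : p ≠ 3 := by rintro rfl; lia
  have hψ : (ZMod.stdAddChar.mulShift (3 : ZMod p)).IsPrimitive := fun a ha ↦ by
    rw [AddChar.mulShift_mulShift]
    exact ZMod.isPrimitive_stdAddChar p (mul_ne_zero (three_ne_zero_zmod hp3) ha)
  obtain ⟨u, hu, hsum⟩ :=
    ((EvalsTo.X_pow (8 * δ)).mul (evalsTo_partitionSeries.pow 8)).exists_atkinU hψ
  have heval := (evalsTo_pentagonalSeries.pow (8 * p)).mul ((hu.C_mul ((p : ℂ) ^ 5)).add
    ((evalsTo_partitionSeries.pow 8).expand (NeZero.ne p)))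
  refine heval.isLevelOneQExpansion (fun z ↦ ?_) (heckeEta_slash hp3)
  have hpow : qParam p z ^ p = qParam 1 z := by
    rw [qParam_pow_eq_div, div_self (NeZero.ne _)]
  rw [heckeEta_apply hδ, hsum _ (norm_qParam_lt_one p z), hpow]
  ring

end HeckeEta

/-! ### Reduction modulo two -/

section ModTwo

theorem pow_prime_pow_eq_expand {l : ℕ} [Fact l.Prime] (s : ℕ) (F : (ZMod l)⟦X⟧) :
    F ^ l ^ s = F.expand (l ^ s) (pow_ne_zero s (NeZero.ne l)) := by
  have hfrob : iterateFrobenius (ZMod l) l s = RingHom.id _ :=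
    RingHom.ext fun a ↦ ZMod.pow_card_pow a
  rw [← MvPowerSeries.map_iterateFrobenius_expand l (NeZero.ne l), hfrob, MvPowerSeries.map_id]
  rfl

theorem X_pow_dvd_expand_sub_C {A : Type*} [CommRing A] {m : ℕ} (hm : m ≠ 0) (F : A⟦X⟧) :
    X ^ m ∣ F.expand m hm - C (constantCoeff F) := by
  rw [← expand_C m hm, ← map_sub]
  obtain ⟨G, hG⟩ := X_dvd_iff.mpr (show constantCoeff (F - C (constantCoeff F)) = 0 by simp)
  rw [hG, map_mul, expand_X]
  exact dvd_mul_right _ _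

theorem expand_injective {A : Type*} [CommRing A] {m : ℕ} (hm : m ≠ 0) :
    Function.Injective (expand m hm : A⟦X⟧ →ₐ[A] A⟦X⟧) := fun F G h ↦
  PowerSeries.ext fun n ↦ by simpa only [coeff_expand_mul] using congrArg (coeff (m * n)) h

theorem coeff_expand_pentagonalSeries_mul_expand_eq_zero {A : Type*} [CommRing A] {p a N : ℕ}
    (hp : p ≠ 0) (ha : a ≠ 0) (F : A⟦X⟧)
    (hN : ∀ x : ZMod p, 2 * (N : ZMod p) ≠ a * (x * (3 * x - 1))) :
    coeff N ((pentagonalSeries A).expand a ha * F.expand p hp) = 0 := by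
  refine (coeff_mul _ _ _).trans (Finset.sum_eq_zero fun ⟨i, j⟩ hij ↦ ?_)
  rw [Finset.HasAntidiagonal.mem_antidiagonal] at hij
  by_contra hne
  obtain ⟨i, rfl⟩ : a ∣ i := by
    by_contra hi
    rw [coeff_expand_of_not_dvd _ _ _ hi, zero_mul] at hne
    exact hne rfl
  obtain ⟨j, rfl⟩ : p ∣ j := by
    by_contra hj
    rw [coeff_expand_of_not_dvd _ _ _ hj, mul_zero] at hne
    exact hne rfl
  obtain ⟨k, rfl⟩ : i ∈ Set.range pentagonal := by
    by_contra hi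
    rw [coeff_expand_mul, coeff_pentagonalSeries_eq_zero _ hi, zero_mul] at hne
    exact hne rfl
  have hpent := congrArg (Int.cast (R := ZMod p)) (two_mul_natCast_pentagonal k)
  push_cast at hpent
  refine hN k ?_
  rw [← hij, ← hpent]
  simp [mul_left_comm]

variable {p δ : ℕ} [Fact p.Prime]

theorem heckeEtaSeries_zmod_two (hp : p ≠ 2) : heckeEtaSeries (ZMod 2) p δ =
    (pentagonalSeries (ZMod 2) ^ p * (atkinU p (X ^ δ * partitionSeries (ZMod 2)) +
      (partitionSeries (ZMod 2)).expand p (NeZero.ne p))).expand 8 (by decide) := by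
  have hpow (F : (ZMod 2)⟦X⟧) : F ^ 8 = F.expand 8 (by decide) := pow_prime_pow_eq_expand 3 F
  have hodd : Odd p := (Fact.out : p.Prime).odd_of_ne_two hp
  have hcop : p.Coprime 8 := Nat.Coprime.pow_right 3 hodd.coprime_two_right
  have hatkin : atkinU p (X ^ (8 * δ) * partitionSeries (ZMod 2) ^ 8) =
      (atkinU p (X ^ δ * partitionSeries (ZMod 2))).expand 8 (by decide) := by
    rw [← atkinU_expand _ hcop, ← hpow, mul_pow, ← pow_mul, mul_comm δ]
  rw [heckeEtaSeries, ZMod.natCast_eq_one_iff_odd.mpr hodd, one_pow, map_one, one_mul, hatkin,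
    map_mul, map_add, map_pow (expand _ _), map_pow, ← hpow, ← hpow, ← hpow, ← pow_mul]

theorem heckeEtaSeries_zmod_two_eq_one (hp : p ≤ 23) (hδ : p ^ 2 = 24 * δ + 1) :
    heckeEtaSeries (ZMod 2) p δ = 1 := by
  have hp2 : p ≠ 2 := by rintro rfl; lia
  have hδ0 : δ ≠ 0 := by
    rintro rfl
    exact (Fact.out : p.Prime).one_lt.ne' (by simpa using hδ)
  obtain ⟨V, hV, hV0⟩ : ∃ V : (ZMod 2)⟦X⟧,
      heckeEtaSeries (ZMod 2) p δ = V.expand 8 (by decide) ∧ constantCoeff V = 1 := by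
    refine ⟨_, heckeEtaSeries_zmod_two hp2, ?_⟩
    rw [map_mul, map_pow, constantCoeff_pentagonalSeries, map_add, constantCoeff_expand,
      constantCoeff_atkinU_X_pow_mul p hδ0, constantCoeff_partitionSeries, one_pow, zero_add,
      mul_one]
  have hmap : (heckeEtaSeries ℤ p δ - eisensteinSeriesFour ^ (p - 1)).map
      (Int.castRingHom (ZMod 2)) = heckeEtaSeries (ZMod 2) p δ - 1 := by
    rw [map_sub, map_pow, map_heckeEtaSeries, map_eisensteinSeriesFour_zmod_two, one_pow]
  have hform : IsLevelOneQExpansion (4 * (p - 1 : ℕ))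
      ((heckeEtaSeries ℤ p δ - eisensteinSeriesFour ^ (p - 1)).map (Int.castRingHom ℂ)) := by
    rw [map_sub, map_pow, map_heckeEtaSeries]
    refine IsLevelOneQExpansion.sub ?_ ?_
    · rw [Nat.cast_pred (NeZero.pos p)]
      exact isLevelOneQExpansion_heckeEtaSeries hδ
    · rw [mul_comm]
      exact isLevelOneQExpansion_eisensteinSeriesFour.pow (p - 1)
  rw [← sub_eq_zero, ← hmap]
  refine hform.map_eq_zero_of_X_pow_dvd ?_
  rw [hmap, hV]
  refine (pow_dvd_pow X (by lia : (p - 1) / 3 + 1 ≤ 8)).trans ?_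
  simpa only [hV0, map_one] using X_pow_dvd_expand_sub_C (by decide : 8 ≠ 0) V

theorem atkinU_X_pow_mul_partitionSeries (hp : p ≤ 23) (hδ : p ^ 2 = 24 * δ + 1) :
    atkinU p (X ^ δ * partitionSeries (ZMod 2)) =
      partitionSeries (ZMod 2) ^ p + (partitionSeries (ZMod 2)).expand p (NeZero.ne p) := by
  have hp2 : p ≠ 2 := by rintro rfl; lia
  have hunit := (heckeEtaSeries_zmod_two hp2).symm.trans (heckeEtaSeries_zmod_two_eq_one hp hδ)
  rw [← map_one (expand 8 (by decide))] at hunit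
  have hinv : partitionSeries (ZMod 2) ^ p * pentagonalSeries (ZMod 2) ^ p = 1 := by
    rw [mul_comm, pentagonalSeries_pow_mul_partitionSeries_pow]
  have hone := congrArg (partitionSeries (ZMod 2) ^ p * ·) (expand_injective _ hunit)
  simp only [← mul_assoc, hinv, one_mul, mul_one] at hone
  rw [← hone, add_assoc, ZModModule.add_self, add_zero]

theorem atkinU_X_pow_mul_regularPartitionSeries {s t : ℕ} (hp : p ≤ 23)
    (hδ : p ^ 2 = 24 * δ + 1) (hst : 2 ^ s + t = p) :
    atkinU p (X ^ δ * regularPartitionSeries (ZMod 2) (2 ^ s * p)) =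
      partitionSeries (ZMod 2) ^ t + (pentagonalSeries (ZMod 2)).expand (2 ^ s) (by simp) *
        (partitionSeries (ZMod 2)).expand p (NeZero.ne p) := by
  have hpow : pentagonalSeries (ZMod 2) ^ 2 ^ s * partitionSeries (ZMod 2) ^ p =
      partitionSeries (ZMod 2) ^ t := by
    conv_lhs => rw [← hst, pow_add, ← mul_assoc, pentagonalSeries_pow_mul_partitionSeries_pow,
      one_mul]
  have hexp : (pentagonalSeries (ZMod 2)).expand (2 ^ s * p) (by simp [NeZero.ne p]) =
      (pentagonalSeries (ZMod 2) ^ 2 ^ s).expand p (NeZero.ne p) := by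
    rw [pow_prime_pow_eq_expand, ← PowerSeries.expand_mul]
    simp only [mul_comm p]
  rw [regularPartitionSeries_eq _ (by simp [NeZero.ne p]), hexp, ← mul_assoc, atkinU_mul_expand,
    atkinU_X_pow_mul_partitionSeries hp hδ, mul_comm, mul_add, hpow, pow_prime_pow_eq_expand]

end ModTwo

theorem stmt_5_general {p s t δ N : ℕ} (hp : p.Prime) (hp23 : p ≤ 23) (hδ : p ^ 2 = 24 * δ + 1)
    (hst : 2 ^ s + t = p) (hδN : δ ≤ p * N)
    (hN : ∀ x : ZMod p, 2 * (N : ZMod p) ≠ 2 ^ s * (x * (3 * x - 1))) :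
    numRegularPartitions (2 ^ s * p) (p * N - δ) ≡ numMultipartitions t N [MOD 2] := by
  have : Fact p.Prime := ⟨hp⟩
  have hcoeff := congrArg (coeff N) (atkinU_X_pow_mul_regularPartitionSeries hp23 hδ hst)
  rw [coeff_atkinU, coeff_X_pow_mul', if_pos hδN, map_add,
    coeff_expand_pentagonalSeries_mul_expand_eq_zero _ _ _ (by exact_mod_cast hN), add_zero,
    coeff_partitionSeries_pow, regularPartitionSeries, coeff_mk] at hcoeff
  exact (ZMod.natCast_eq_natCast_iff _ _ _).mp hcoeff

theorem stmt_5 (n : ℕ) :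
    (∀ B ∈ ({1, 3, 8, 9, 12, 15, 16, 17, 18} : Finset ℕ),
      numRegularPartitions 38 (361 * n + 19 * B - 15) ≡
        numMultipartitions 17 (19 * n + B) [MOD 2]) ∧
    (∀ B ∈ ({2, 5, 6, 11, 13, 15, 16, 17, 18} : Finset ℕ),
      numRegularPartitions 76 (361 * n + 19 * B - 15) ≡
        numMultipartitions 15 (19 * n + B) [MOD 2]) ∧
    (∀ B ∈ ({3, 4, 7, 10, 11, 12, 13, 15, 17} : Finset ℕ),
      numRegularPartitions 152 (361 * n + 19 * B - 15) ≡
        numMultipartitions 11 (19 * n + B) [MOD 2]) ∧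
    (∀ B ∈ ({1, 3, 5, 6, 7, 8, 11, 14, 15} : Finset ℕ),
      numRegularPartitions 304 (361 * n + 19 * B - 15) ≡
        numMultipartitions 3 (19 * n + B) [MOD 2]) := by
  have key {s t : ℕ} (hst : 2 ^ s + t = 19) (B : ℕ) (hB : B ≠ 0 ∧
      ∀ x : ZMod 19, 2 * (B : ZMod 19) ≠ 2 ^ s * (x * (3 * x - 1))) :
      numRegularPartitions (2 ^ s * 19) (361 * n + 19 * B - 15) ≡
        numMultipartitions t (19 * n + B) [MOD 2] := by
    rw [show 361 * n + 19 * B = 19 * (19 * n + B) by ring]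
    refine stmt_5_general (by norm_num) (by norm_num) (by norm_num) hst (by lia) ?_
    rw [Nat.cast_add, Nat.cast_mul, ZMod.natCast_self, zero_mul, zero_add]
    exact hB.2
  refine ⟨fun B hB ↦ key (s := 1) rfl B ?_, fun B hB ↦ key (s := 2) rfl B ?_,
    fun B hB ↦ key (s := 3) rfl B ?_, fun B hB ↦ key (s := 4) rfl B ?_⟩ <;>
  · revert B
    decide
end
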